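/- arXiv:1503.08159 — 2 statements merged into one kernel-verified Lean document; each statement's English description precedes it below -/
import Mathlib

section
/- The number C_k of rooted 2-connected planar maps with k edges satisfies C_0 = 1 and C_k = 2·(3k−3)!/(k!·(2k−1)!) for k ≥ 1. -/
/-- The number of cycles (including fixed points) of a permutation of `Fin m`. -/
def numCycles {m : ℕ} (f : Equiv.Perm (Fin m)) : ℕ :=
  m - f.cycleType.sum + f.cycleType.card

/-- A rooted (combinatorial, planar) map with `n` edges, encoded by a rotation
system on the `2n` darts (oriented edges): `σ` is the counterclockwise rotation
of darts around their tail vertex, `α` is the fixed-point-free involution pairing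
the two darts of each edge, the group `⟨σ, α⟩` acts transitively on darts
(connectedness), Euler's formula `V - E + F = 2` holds (planarity, i.e. genus
zero), and `root` is the distinguished root dart.  Vertices are the cycles of
`σ`, edges the cycles of `α`, faces the cycles of `σ * α`.  Isomorphism classes
of such structures (for `n ≥ 1`) are exactly rooted planar maps with `n` edges,
considered up to orientation-preserving homeomorphisms of the plane. -/
structure RMap (n : ℕ) where
  σ : Equiv.Perm (Fin (2 * n))
  α : Equiv.Perm (Fin (2 * n))
  root : Fin (2 * n)
  inv : ∀ d, α (α d) = d
  fpf : ∀ d, α d ≠ d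
  conn : ∀ d e : Fin (2 * n),
    ∃ g ∈ Subgroup.closure ({σ, α} : Set (Equiv.Perm (Fin (2 * n)))), g d = e
  euler : numCycles σ + numCycles (σ * α) = n + 2

/-- Root-preserving isomorphism of rooted maps: a relabelling of the darts
conjugating the rotation systems and preserving the root dart. -/
def RMapIso {n : ℕ} (M M' : RMap n) : Prop :=
  ∃ e : Equiv.Perm (Fin (2 * n)),
    (∀ d, e (M.σ d) = M'.σ (e d)) ∧ (∀ d, e (M.α d) = M'.α (e d)) ∧
      e M.root = M'.root

/-- The number of rooted planar maps with `n` edges: the number of isomorphism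
classes of rooted map structures (with the convention that the trivial map is
the unique map with `0` edges). -/
noncomputable def mapCount (n : ℕ) : ℕ :=
  if n = 0 then 1 else Nat.card (Quot (@RMapIso n))

/-- A rooted map is separable if its edge set can be partitioned into two
nonempty parts such that exactly one vertex is incident to edges of both parts.
Here an edge set is an `α`-invariant set `S` of darts, a vertex is a cycle of
`σ`, and a vertex is incident to an edge of `S` iff its `σ`-cycle meets `S`. -/
def RMap.Separable {n : ℕ} (M : RMap n) : Prop :=
  ∃ S : Finset (Fin (2 * n)), S.Nonempty ∧ Sᶜ.Nonempty ∧
    (∀ d ∈ S, M.α d ∈ S) ∧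
    ∃ d₀ : Fin (2 * n),
      ((∃ a ∈ S, M.σ.SameCycle d₀ a) ∧ (∃ b ∈ Sᶜ, M.σ.SameCycle d₀ b)) ∧
      ∀ d : Fin (2 * n), (∃ a ∈ S, M.σ.SameCycle d a) →
        (∃ b ∈ Sᶜ, M.σ.SameCycle d b) → M.σ.SameCycle d₀ d

/-- The number of rooted 2-connected (i.e. non-separable) planar maps with `k`
edges, with the convention `C 0 = 1`. -/
noncomputable def bconnCount (k : ℕ) : ℕ :=
  if k = 0 then 1
  else Nat.card (Quot (fun M M' : {M : RMap k // ¬ M.Separable} => RMapIso M.1 M'.1))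

section

open Equiv Equiv.Perm

set_option linter.unusedSectionVars false

/-- The number of cycles of a permutation, fixed points included. -/
noncomputable def nc {D : Type} (g : Perm D) : ℕ :=
  Nat.card (Quotient (SameCycle.setoid g))

section cycles
variable {D : Type}

theorem SameCycle.of_forall {g : Perm D} [Finite D] (r : Setoid D) (h : ∀ x, r x (g x))
    {x y : D} (hxy : g.SameCycle x y) : r x y := by
  obtain ⟨i, rfl⟩ := hxy.exists_nat_pow_eq
  clear hxy
  induction i with
  | zero => exact r.refl _
  | succ k ih => rw [pow_succ', Perm.mul_apply]; exact r.trans ih (h _)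

theorem SameCycle.map_eq {g : Perm D} [Finite D] {X : Type*} (f : D → X) (h : ∀ x, f (g x) = f x)
    {x y : D} (hxy : g.SameCycle x y) : f x = f y :=
  SameCycle.of_forall (Setoid.ker f) (fun x => (h x).symm) hxy

theorem SameCycle.apply_right (g : Perm D) (x : D) : g.SameCycle x (g x) :=
  sameCycle_apply_right.2 (SameCycle.refl _ _)

/-- A cycle which meets a set and its complement leaves the set somewhere. -/
theorem SameCycle.exists_exit {g : Perm D} [Finite D] (p : D → Prop) {x y : D}
    (hxy : g.SameCycle x y) (hx : p x) (hy : ¬ p y) : ∃ z, g.SameCycle x z ∧ p z ∧ ¬ p (g z) := by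
  obtain ⟨i, rfl⟩ := hxy.exists_nat_pow_eq
  clear hxy
  induction i with
  | zero => exact absurd hx hy
  | succ k ih =>
    by_cases h : p ((g ^ k) x)
    · exact ⟨_, sameCycle_pow_right.2 (SameCycle.refl _ _), h,
        by rwa [← Perm.mul_apply, ← pow_succ']⟩
    · exact ih h

variable [Fintype D] [DecidableEq D]

theorem nc_eq_cycleType (f : Perm D) :
    nc f = Fintype.card D - f.cycleType.sum + f.cycleType.card := by
  classical
  have h1 : f.cycleType.card = Nat.card f.cycleFactorsFinset := by
    rw [cycleType_def]; simp
  rw [← card_fixedPoints, h1, ← Nat.card_eq_fintype_card, ← Nat.card_sum]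
  let F : D → Function.fixedPoints f ⊕ f.cycleFactorsFinset := fun x =>
    if h : f x = x then Sum.inl ⟨x, h⟩
    else Sum.inr ⟨f.cycleOf x, cycleOf_mem_cycleFactorsFinset_iff.2 (mem_support.2 h)⟩
  have hF : ∀ x y, f.SameCycle x y ↔ F x = F y := by
    intro x y
    by_cases hx : f x = x <;> by_cases hy : f y = y
    · simp only [F, hx, hy, dif_pos, Sum.inl.injEq]
      refine ⟨fun h => Subtype.ext (h.eq_of_left hx), fun h => ?_⟩
      have : x = y := congrArg Subtype.val h
      exact this ▸ SameCycle.refl _ _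
    · simp only [F, hx, hy, dif_pos, dif_neg, not_false_eq_true, reduceCtorEq, iff_false]
      exact fun h => hy (h.apply_eq_self_iff.1 hx)
    · simp only [F, hx, hy, dif_pos, dif_neg, not_false_eq_true, reduceCtorEq, iff_false]
      exact fun h => hx (h.apply_eq_self_iff.2 hy)
    · simp only [F, hx, hy, dif_neg, not_false_eq_true, Sum.inr.injEq, Subtype.mk.injEq]
      exact sameCycle_iff_cycleOf_eq_of_mem_support (mem_support.2 hx) (mem_support.2 hy)
  refine Nat.card_eq_of_bijective (Quotient.lift F fun x y h => (hF x y).1 h) ⟨?_, ?_⟩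
  · rintro ⟨x⟩ ⟨y⟩ h
    exact Quotient.sound ((hF x y).2 h)
  · rintro (⟨x, hx⟩ | ⟨c, hc⟩)
    · exact ⟨Quotient.mk _ x, dif_pos hx⟩
    · obtain ⟨hc1, hc2⟩ := mem_cycleFactorsFinset_iff.1 hc
      obtain ⟨x, hx, -⟩ := hc1
      have hx' : x ∈ c.support := mem_support.2 hx
      have hfx : f x ≠ x := by rw [← hc2 x hx']; exact hx
      refine ⟨Quotient.mk _ x, ?_⟩
      change F x = _
      simp only [F, hfx, dif_neg, not_false_eq_true, Sum.inr.injEq, Subtype.mk.injEq]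
      exact (cycle_is_cycleOf hx' hc).symm

theorem sign_eq_nc (f : Perm D) : sign f = (-1) ^ (Fintype.card D + nc f) := by
  rw [sign_of_cycleType, nc_eq_cycleType]
  have := sum_cycleType_le f
  obtain ⟨k, hk⟩ := Nat.exists_eq_add_of_le this
  rw [hk]
  have : f.cycleType.sum + k + (f.cycleType.sum + k - f.cycleType.sum + f.cycleType.card)
    = (f.cycleType.sum + f.cycleType.card) + 2 * k := by omega
  rw [this, pow_add _ _ (2 * k), pow_mul]; simp

end cycles

section join
variable {D : Type}

/-- The setoid obtained by merging the classes of `u` and `v`. -/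
def joinSetoid (r : Setoid D) (u v : D) : Setoid D where
  r x y := r x y ∨ (r x u ∧ r y v) ∨ (r x v ∧ r y u)
  iseqv :=
    { refl := fun x => Or.inl (r.refl x)
      symm := by
        rintro x y (h | ⟨h, h'⟩ | ⟨h, h'⟩)
        · exact Or.inl (r.symm h)
        · exact Or.inr (Or.inr ⟨h', h⟩)
        · exact Or.inr (Or.inl ⟨h', h⟩)
      trans := by
        rintro x y z (h | ⟨h, h'⟩ | ⟨h, h'⟩) (k | ⟨k, k'⟩ | ⟨k, k'⟩)
        · exact Or.inl (r.trans h k)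
        · exact Or.inr (Or.inl ⟨r.trans h k, k'⟩)
        · exact Or.inr (Or.inr ⟨r.trans h k, k'⟩)
        · exact Or.inr (Or.inl ⟨h, r.trans (r.symm k) h'⟩)
        · exact Or.inr (Or.inl ⟨h, k'⟩)
        · exact Or.inl (r.trans h (r.symm k'))
        · exact Or.inr (Or.inr ⟨h, r.trans (r.symm k) h'⟩)
        · exact Or.inl (r.trans h (r.symm k'))
        · exact Or.inr (Or.inr ⟨h, k'⟩) }

theorem joinSetoid_iff {r : Setoid D} {u v x y : D} :
    joinSetoid r u v x y ↔ r x y ∨ (r x u ∧ r y v) ∨ (r x v ∧ r y u) := Iff.rfl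

theorem joinSetoid_eq_self {r : Setoid D} {u v : D} (h : r u v) : joinSetoid r u v = r := by
  ext x y
  rw [joinSetoid_iff]
  refine ⟨?_, Or.inl⟩
  rintro (k | ⟨k, k'⟩ | ⟨k, k'⟩)
  · exact k
  · exact r.trans (r.trans k h) (r.symm k')
  · exact r.trans (r.trans k (r.symm h)) (r.symm k')

theorem card_joinSetoid [Finite D] {r : Setoid D} {u v : D} (h : ¬ r u v) :
    Nat.card (Quotient (joinSetoid r u v)) + 1 = Nat.card (Quotient r) := by
  classical
  let V : Quotient r := Quotient.mk r v
  have : Nat.card (Quotient r) = Nat.card {q : Quotient r // q ≠ V} + 1 := by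
    rw [← Nat.card_congr (Equiv.sumCompl (fun q : Quotient r => q = V)), Nat.card_sum, add_comm]
    simp
  rw [this, Nat.add_right_cancel_iff, eq_comm]
  let f : {q : Quotient r // q ≠ V} → Quotient (joinSetoid r u v) := fun q =>
    Quotient.lift (fun x => Quotient.mk (joinSetoid r u v) x)
      (fun x y hxy => Quotient.sound (s := joinSetoid r u v) (Or.inl hxy)) q.1
  refine Nat.card_eq_of_bijective f ⟨?_, ?_⟩
  · rintro ⟨⟨x⟩, hx⟩ ⟨⟨y⟩, hy⟩ hxy
    have hx' : ¬ r x v := fun h => hx (Quotient.sound h)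
    have hy' : ¬ r y v := fun h => hy (Quotient.sound h)
    have := Quotient.exact (s := joinSetoid r u v) hxy
    rcases this with k | ⟨k, k'⟩ | ⟨k, k'⟩
    · exact Subtype.ext (Quotient.sound k)
    · exact absurd k' hy'
    · exact absurd k hx'
  · rintro ⟨x⟩
    by_cases hx : r x v
    · refine ⟨⟨Quotient.mk r u, fun hh => h (Quotient.exact hh)⟩, ?_⟩
      exact Quotient.sound (s := joinSetoid r u v) (Or.inr (Or.inl ⟨r.refl u, hx⟩))
    · exact ⟨⟨Quotient.mk r x, fun hh => hx (Quotient.exact hh)⟩, rfl⟩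

end join

section swap
variable {D : Type} [Fintype D] [DecidableEq D]

theorem sameCycle_swap_mul_of_not {g : Perm D} {u v : D} (h : ¬ g.SameCycle u v) :
    (swap u v * g).SameCycle u v := by
  have key : ∀ i : ℕ, ((swap u v * g) ^ i) v = (g ^ i) v ∨ (swap u v * g).SameCycle u v := by
    intro i
    induction i with
    | zero => left; rfl
    | succ k ih =>
      rcases ih with ih | ih
      · have e : ((swap u v * g) ^ (k + 1)) v = swap u v ((g ^ (k + 1)) v) := by
          rw [pow_succ', Perm.mul_apply, ih, pow_succ' g]; rfl
        by_cases h1 : (g ^ (k + 1)) v = v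
        · right
          rw [h1, swap_apply_right] at e
          exact SameCycle.symm ⟨(k + 1 : ℕ), by rw [zpow_natCast]; exact e⟩
        · left
          rw [e, swap_apply_of_ne_of_ne _ h1]
          intro h2
          exact h (SameCycle.symm ⟨(k + 1 : ℕ), by rw [zpow_natCast]; exact h2⟩)
      · exact Or.inr ih
  have hn := orderOf_pos g
  have e : ((swap u v * g) ^ orderOf g) v = swap u v ((g ^ orderOf g) v) ∨
      (swap u v * g).SameCycle u v := by
    obtain ⟨k, hk⟩ : ∃ k, orderOf g = k + 1 := ⟨orderOf g - 1, by omega⟩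
    rw [hk]
    rcases key k with ih | ih
    · left; rw [pow_succ', Perm.mul_apply, ih, pow_succ' g]; rfl
    · exact Or.inr ih
  rcases e with e | e
  · rw [pow_orderOf_eq_one, Perm.one_apply, swap_apply_right] at e
    exact SameCycle.symm ⟨(orderOf g : ℕ), by rw [zpow_natCast]; exact e⟩
  · exact e

theorem SameCycle.of_swap_mul {g : Perm D} {u v : D} (huv : (swap u v * g).SameCycle u v)
    {x y : D} (h : g.SameCycle x y) : (swap u v * g).SameCycle x y := by
  refine SameCycle.of_forall (SameCycle.setoid _) (fun x => ?_) h
  change (swap u v * g).SameCycle x (g x)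
  have h1 := SameCycle.apply_right (swap u v * g) x
  rw [Perm.mul_apply] at h1
  by_cases hu : g x = u
  · rw [hu, swap_apply_left] at h1; rw [hu]; exact h1.trans huv.symm
  by_cases hv : g x = v
  · rw [hv, swap_apply_right] at h1; rw [hv]; exact h1.trans huv
  rwa [swap_apply_of_ne_of_ne hu hv] at h1

theorem SameCycle.join_of_swap_mul {g : Perm D} {u v x y : D}
    (h : (swap u v * g).SameCycle x y) : joinSetoid (SameCycle.setoid g) u v x y := by
  refine SameCycle.of_forall (joinSetoid (SameCycle.setoid g) u v) (fun x => ?_) h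
  rw [joinSetoid_iff, Perm.mul_apply]
  have h1 := SameCycle.apply_right g x
  by_cases hu : g x = u
  · rw [hu, swap_apply_left]; exact Or.inr (Or.inl ⟨hu ▸ h1, (SameCycle.setoid g).refl _⟩)
  by_cases hv : g x = v
  · rw [hv, swap_apply_right]; exact Or.inr (Or.inr ⟨hv ▸ h1, (SameCycle.setoid g).refl _⟩)
  rw [swap_apply_of_ne_of_ne hu hv]; exact Or.inl h1

/-- Multiplying by a transposition of two elements of a common cycle refines the cycles. -/
theorem SameCycle.of_swap_mul_of_sameCycle {g : Perm D} {u v : D} (huv : g.SameCycle u v) {x y : D}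
    (h : (swap u v * g).SameCycle x y) : g.SameCycle x y := by
  have := SameCycle.join_of_swap_mul h
  rwa [joinSetoid_eq_self (r := SameCycle.setoid g) huv] at this

theorem setoid_swap_mul {g : Perm D} {u v : D} (h : ¬ g.SameCycle u v) :
    SameCycle.setoid (swap u v * g) = joinSetoid (SameCycle.setoid g) u v := by
  have huv := sameCycle_swap_mul_of_not h
  ext x y
  refine ⟨SameCycle.join_of_swap_mul, ?_⟩
  rintro (k | ⟨k, k'⟩ | ⟨k, k'⟩)
  · exact SameCycle.of_swap_mul huv k
  · exact ((SameCycle.of_swap_mul huv k).trans huv).trans (SameCycle.of_swap_mul huv k').symm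
  · exact ((SameCycle.of_swap_mul huv k).trans huv.symm).trans (SameCycle.of_swap_mul huv k').symm

theorem nc_swap_mul_of_not {g : Perm D} {u v : D} (h : ¬ g.SameCycle u v) :
    nc (swap u v * g) + 1 = nc g := by
  rw [nc, setoid_swap_mul h]
  exact card_joinSetoid h

theorem not_sameCycle_swap_mul {g : Perm D} {u v : D} (huv : u ≠ v) (h : g.SameCycle u v) :
    ¬ (swap u v * g).SameCycle u v := by
  intro h'
  have e : SameCycle.setoid (swap u v * g) = SameCycle.setoid g := by
    ext x y
    exact ⟨fun k => SameCycle.of_swap_mul_of_sameCycle h k, fun k => SameCycle.of_swap_mul h' k⟩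
  have e2 : nc (swap u v * g) = nc g := by rw [nc, e, nc]
  have s1 := sign_eq_nc (swap u v * g)
  rw [e2, ← sign_eq_nc, Perm.sign_mul, sign_swap huv] at s1
  rcases Int.units_eq_one_or (sign g) with hs | hs <;> rw [hs] at s1 <;> revert s1 <;> decide

theorem nc_swap_mul_of_sameCycle {g : Perm D} {u v : D} (huv : u ≠ v) (h : g.SameCycle u v) :
    nc (swap u v * g) = nc g + 1 := by
  have h1 := nc_swap_mul_of_not (not_sameCycle_swap_mul huv h)
  rw [← mul_assoc, swap_mul_self, one_mul] at h1
  exact h1.symm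

theorem nc_swap_mul_le (g : Perm D) (u v : D) : nc (swap u v * g) ≤ nc g + 1 := by
  by_cases huv : u = v
  · subst huv; rw [show swap u u * g = g from by ext; simp]; omega
  by_cases h : g.SameCycle u v
  · rw [nc_swap_mul_of_sameCycle huv h]
  · have := nc_swap_mul_of_not h; omega

/-- Multiplication by a transposition does not affect the cycles avoiding it. -/
theorem SameCycle.swap_mul_of_avoid {g : Perm D} {u v x y : D} (hu : ¬ g.SameCycle x u)
    (hv : ¬ g.SameCycle x v) (h : g.SameCycle x y) : (swap u v * g).SameCycle x y := by
  obtain ⟨i, rfl⟩ := h.exists_nat_pow_eq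
  clear h
  refine ⟨(i : ℕ), ?_⟩
  rw [zpow_natCast]
  induction i with
  | zero => rfl
  | succ k ih =>
    rw [pow_succ', Perm.mul_apply, ih, Perm.mul_apply, ← Perm.mul_apply g, ← pow_succ',
      swap_apply_of_ne_of_ne]
    · rintro rfl; exact hu (sameCycle_pow_right.2 (SameCycle.refl _ _))
    · rintro rfl; exact hv (sameCycle_pow_right.2 (SameCycle.refl _ _))

end swap

section genus
variable {D : Type}

/-- The partition of the darts into connected components. -/
def orbS (σ α : Perm D) : Setoid D := SameCycle.setoid σ ⊔ SameCycle.setoid α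

theorem orbS_left (σ α : Perm D) (x : D) : orbS σ α x (σ x) :=
  (le_sup_left : SameCycle.setoid σ ≤ orbS σ α) (SameCycle.apply_right σ x)

theorem orbS_right (σ α : Perm D) (x : D) : orbS σ α x (α x) :=
  (le_sup_right : SameCycle.setoid α ≤ orbS σ α) (SameCycle.apply_right α x)

theorem orbS_le [Finite D] {σ α : Perm D} {r : Setoid D} (hσ : ∀ x, r x (σ x))
    (hα : ∀ x, r x (α x)) : orbS σ α ≤ r :=
  sup_le (fun {_ _} h => SameCycle.of_forall r hσ h) (fun {_ _} h => SameCycle.of_forall r hα h)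

theorem card_quotient_le_of_le [Finite D] {r s : Setoid D} (h : r ≤ s) :
    Nat.card (Quotient s) ≤ Nat.card (Quotient r) := by
  refine Nat.card_le_card_of_surjective
    (Quotient.lift (fun x => Quotient.mk s x) fun x y hxy => Quotient.sound (h hxy)) ?_
  rintro ⟨x⟩
  exact ⟨Quotient.mk r x, rfl⟩

/-- Nonnegativity of the genus. -/
theorem genus_nonneg [Fintype D] [DecidableEq D] (σ : Perm D) (n : ℕ) :
    ∀ α : Perm D, (∀ x, α (α x) = x) → α.support.card = n →
      2 * (nc σ + nc (σ * α)) ≤ 4 * Nat.card (Quotient (orbS σ α)) + n := by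
  induction n using Nat.strong_induction_on with
  | _ n ih =>
    intro α hα hn
    by_cases h1 : α = 1
    · subst h1
      have : nc σ ≤ Nat.card (Quotient (orbS σ 1)) :=
        card_quotient_le_of_le
          (orbS_le (SameCycle.apply_right σ) (fun x => SameCycle.refl σ x))
      rw [mul_one]; omega
    obtain ⟨x, hx⟩ : ∃ x, α x ≠ x := by
      by_contra! h; exact h1 (Equiv.ext h)
    set y := α x with hy
    have hyx : α y = x := hα x
    set β : Perm D := swap x y * α with hβ
    have hβx : β x = x := by simp [hβ, ← hy]
    have hβy : β y = y := by simp [hβ, hyx]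
    have hβo : ∀ z, z ≠ x → z ≠ y → β z = α z := by
      intro z hzx hzy
      rw [hβ, Perm.mul_apply, swap_apply_of_ne_of_ne]
      · intro h; exact hzy (by rw [hy, ← h, hα])
      · intro h; exact hzx (α.injective (h.trans hy))
    have hβi : ∀ z, β (β z) = z := by
      intro z
      by_cases hzx : z = x
      · rw [hzx, hβx, hβx]
      by_cases hzy : z = y
      · rw [hzy, hβy, hβy]
      rw [hβo z hzx hzy, hβo, hα]
      · intro h; exact hzy (by rw [hy, ← h, hα])
      · intro h; exact hzx (α.injective (h.trans hy))
    have hsup : β.support = (α.support.erase x).erase y := by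
      ext z
      simp only [mem_support, Finset.mem_erase]
      by_cases hzx : z = x
      · simp [hzx, hβx]
      by_cases hzy : z = y
      · simp [hzy, hβy]
      simp [hβo z hzx hzy, hzx, hzy]
    have hcard : β.support.card + 2 = n := by
      have h1 : x ∈ α.support := mem_support.2 hx
      have h2 : y ∈ α.support.erase x :=
        Finset.mem_erase.2 ⟨hx, mem_support.2 (by rw [hyx]; exact hx.symm)⟩
      rw [hsup, Finset.card_erase_of_mem h2, Finset.card_erase_of_mem h1, hn]
      have := Finset.card_pos.2 ⟨_, h2⟩
      rw [Finset.card_erase_of_mem h1, hn] at this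
      omega
    have hI := ih _ (by omega) β hβi rfl
    have hαβ : σ * α = swap (σ x) (σ y) * (σ * β) := by
      rw [Equiv.swap_apply_apply, hβ]
      simp [mul_assoc, ← mul_assoc (swap x y) (swap x y)]
    have hle : orbS σ α ≤ joinSetoid (orbS σ β) x y := by
      refine orbS_le (fun z => Or.inl (orbS_left _ _ _)) fun z => ?_
      by_cases hzx : z = x
      · subst hzx; exact Or.inr (Or.inl ⟨(orbS σ β).refl _, (orbS σ β).refl _⟩)
      by_cases hzy : z = y
      · rw [hzy, hyx]; exact Or.inr (Or.inr ⟨(orbS σ β).refl _, (orbS σ β).refl _⟩)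
      rw [← hβo z hzx hzy]; exact Or.inl (orbS_right _ _ _)
    have hle' := card_quotient_le_of_le hle
    by_cases ho : orbS σ β x y
    · rw [joinSetoid_eq_self ho] at hle'
      have := nc_swap_mul_le (σ * β) (σ x) (σ y)
      rw [hαβ]; omega
    · have h2 := card_joinSetoid ho
      have h3 : ¬ (σ * β).SameCycle (σ x) (σ y) := by
        intro h
        refine ho ?_
        have : orbS σ β (σ x) (σ y) := SameCycle.of_forall (orbS σ β)
          (fun z => (orbS σ β).trans (orbS_right σ β z) (orbS_left σ β _)) h
        exact (orbS σ β).trans (orbS_left σ β x)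
          ((orbS σ β).trans this ((orbS σ β).symm (orbS_left σ β y)))
      have := nc_swap_mul_of_not h3
      rw [hαβ]; omega

/-- Transitivity, phrased with invariant predicates. -/
def Conn (σ α : Perm D) : Prop :=
  ∀ p : D → Prop, (∀ d, p d → p (σ d)) → (∀ d, p d → p (α d)) → ∀ x y, p x → p y

theorem Conn.genus [Fintype D] [DecidableEq D] {σ α : Perm D} (h : Conn σ α)
    (hα : ∀ x, α (α x) = x) : 2 * (nc σ + nc (σ * α)) ≤ Nat.card D + 4 := by
  have h1 := genus_nonneg σ _ α hα rfl
  have h2 : Nat.card (Quotient (orbS σ α)) ≤ 1 := by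
    rw [Finite.card_le_one_iff_subsingleton]
    refine ⟨?_⟩
    rintro ⟨x⟩ ⟨y⟩
    exact Quotient.sound (h (fun z => orbS σ α x z)
      (fun d hd => (orbS σ α).trans hd (orbS_left _ _ _))
      (fun d hd => (orbS σ α).trans hd (orbS_right _ _ _)) x y ((orbS σ α).refl x))
  have h3 := Finset.card_le_univ α.support
  rw [Nat.card_eq_fintype_card]
  omega

theorem forall_iff_of_forall_imp [Finite D] {p : D → Prop} {f : Perm D}
    (hf : ∀ d, p d → p (f d)) (z : D) :
    p (f z) ↔ p z := by
  refine ⟨fun h => ?_, hf z⟩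
  have : ∀ k : ℕ, p ((f ^ k) (f z)) := by
    intro k
    induction k with
    | zero => exact h
    | succ k ih => rw [pow_succ', Perm.mul_apply]; exact hf _ ih
  have h3 := this (orderOf f - 1)
  rwa [← Perm.mul_apply, ← pow_succ, Nat.sub_add_cancel (orderOf_pos f), pow_orderOf_eq_one] at h3

theorem orbS_iff_of_closed [Finite D] {σ α : Perm D} {p : D → Prop} (h1 : ∀ d, p d → p (σ d))
    (h2 : ∀ d, p d → p (α d)) {x y : D} (h : orbS σ α x y) : p x ↔ p y :=
  iff_of_eq (orbS_le (r := Setoid.ker p)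
    (fun x => propext (forall_iff_of_forall_imp h1 x).symm)
    (fun x => propext (forall_iff_of_forall_imp h2 x).symm) h)

/-- Nonseparability: a vertex and a face share at most one corner. -/
def NSep (σ α : Perm D) : Prop :=
  ∀ x y, σ.SameCycle x y → (σ * α).SameCycle x y → x = y

/-- Nonseparable planar maps on a given set of darts. -/
structure PMap (σ α : Perm D) : Prop where
  inv : ∀ x, α (α x) = x
  fpf : ∀ x, α x ≠ x
  conn : Conn σ α
  euler : 2 * (nc σ + nc (σ * α)) = Nat.card D + 4
  ns : NSep σ α

end genus

section separable
variable {n : ℕ} (M : RMap n)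

theorem RMap.conn' : Conn M.σ M.α := by
  intro p h1 h2 x y hx
  obtain ⟨g, hg, rfl⟩ := M.conn x y
  suffices ∀ z, p (g z) ↔ p z from (this x).2 hx
  induction hg using Subgroup.closure_induction with
  | mem f hf =>
    rcases hf with rfl | rfl
    · exact forall_iff_of_forall_imp h1
    · exact forall_iff_of_forall_imp h2
  | one => intro z; rfl
  | mul f g _ _ hf hg => intro z; rw [Perm.mul_apply, hf, hg]
  | inv f _ hf => intro z; rw [← hf]; simp

theorem Conn.closure {D : Type} [Finite D] {σ α : Perm D} (h : Conn σ α) (d e : D) :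
    ∃ g ∈ Subgroup.closure ({σ, α} : Set (Perm D)), g d = e := by
  refine h (fun x => ∃ g ∈ Subgroup.closure ({σ, α} : Set (Perm D)), g d = x) ?_ ?_ d e
    ⟨1, one_mem _, rfl⟩
  · rintro _ ⟨g, hg, rfl⟩
    exact ⟨σ * g, mul_mem (Subgroup.subset_closure (by simp)) hg, rfl⟩
  · rintro _ ⟨g, hg, rfl⟩
    exact ⟨α * g, mul_mem (Subgroup.subset_closure (by simp)) hg, rfl⟩

theorem numCycles_eq_nc {m : ℕ} (f : Perm (Fin m)) : numCycles f = nc f := by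
  rw [nc_eq_cycleType, numCycles, Fintype.card_fin]

theorem RMap.euler' : 2 * (nc M.σ + nc (M.σ * M.α)) = Nat.card (Fin (2 * n)) + 4 := by
  rw [← numCycles_eq_nc, ← numCycles_eq_nc, M.euler, Nat.card_fin]; ring

theorem RMap.separable_of_not_nsep (h : ¬ NSep M.σ M.α) : M.Separable := by
  classical
  simp only [NSep, not_forall] at h
  obtain ⟨d, d', hσ, hφ, hne⟩ := h
  set σ' := swap d d' * M.σ with hσ'
  have c1 := nc_swap_mul_of_sameCycle hne hσ
  have c2 := nc_swap_mul_of_sameCycle hne hφ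
  rw [← mul_assoc, ← hσ'] at c2
  rw [← hσ'] at c1
  have hM := M.euler'
  have hback : ∀ z, M.σ z = swap d d' (σ' z) := by intro z; simp [hσ']
  have hd' : ¬ orbS σ' M.α d d' := by
    intro hdd
    have hc : Conn σ' M.α := by
      intro p h1 h2 x y hx
      have h3 := M.conn' (fun z => orbS σ' M.α x z) ?_ ?_ x y ((orbS σ' M.α).refl x)
      · exact (orbS_iff_of_closed h1 h2 h3).1 hx
      · intro z hz
        have hz' := (orbS σ' M.α).trans hz (orbS_left σ' M.α z)
        rw [hback]
        by_cases e1 : σ' z = d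
        · rw [e1, swap_apply_left]; rw [e1] at hz'; exact (orbS σ' M.α).trans hz' hdd
        by_cases e2 : σ' z = d'
        · rw [e2, swap_apply_right]; rw [e2] at hz'
          exact (orbS σ' M.α).trans hz' ((orbS σ' M.α).symm hdd)
        rwa [swap_apply_of_ne_of_ne e1 e2]
      · exact fun z hz => (orbS σ' M.α).trans hz (orbS_right σ' M.α z)
    have := hc.genus M.inv
    omega
  refine ⟨Finset.univ.filter (fun z => orbS σ' M.α d z), ⟨d, ?_⟩, ⟨d', ?_⟩, ?_, d,
    ⟨⟨d, ?_, SameCycle.refl _ _⟩, ⟨d', ?_, hσ⟩⟩, ?_⟩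
  · simp
  · simpa using hd'
  · intro z hz
    simp only [Finset.mem_filter, Finset.mem_univ, true_and] at hz ⊢
    exact (orbS σ' M.α).trans hz (orbS_right σ' M.α z)
  · simp
  · simpa using hd'
  · rintro z ⟨x, hx, hzx⟩ ⟨y, hy, hzy⟩
    simp only [Finset.mem_filter, Finset.mem_univ, true_and, Finset.mem_compl] at hx hy
    obtain ⟨w, hw1, hw2, hw3⟩ := SameCycle.exists_exit (fun z => orbS σ' M.α d z)
      (hzx.symm.trans hzy) hx hy
    have hw' := (orbS σ' M.α).trans hw2 (orbS_left σ' M.α w)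
    have h4 : M.σ.SameCycle d (M.σ w) := by
      rw [hback] at hw3 ⊢
      by_cases e1 : σ' w = d
      · rw [e1, swap_apply_left]; exact hσ
      by_cases e2 : σ' w = d'
      · rw [e2, swap_apply_right]
      rw [swap_apply_of_ne_of_ne e1 e2] at hw3
      exact absurd hw' hw3
    exact (sameCycle_apply_right.1 h4).trans (hw1.symm.trans hzx.symm)

theorem RMap.not_nsep_of_separable (h : M.Separable) : ¬ NSep M.σ M.α := by
  obtain ⟨S, -, -, hα, d₀, ⟨⟨s, hs, hs'⟩, ⟨t, ht, ht'⟩⟩, huniq⟩ := h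
  intro hns
  have hα' : ∀ z, z ∉ S → M.α z ∉ S := fun z hz h => hz (by rw [← M.inv z]; exact hα _ h)
  obtain ⟨x, hx1, hx2, hx3⟩ := SameCycle.exists_exit (fun z => z ∈ S) (hs'.symm.trans ht') hs
    (Finset.mem_compl.1 ht)
  have hφ : ∀ z, (M.σ * M.α) (M.α z) = M.σ z := by intro z; simp [M.inv]
  have hf : (M.σ * M.α).SameCycle (M.σ x) (M.α x) := by
    rw [← hφ]; exact sameCycle_apply_left.2 (SameCycle.refl _ _)
  obtain ⟨z, hz1, hz2, hz3⟩ := SameCycle.exists_exit (fun z => z ∉ S) hf hx3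
    (not_not.2 (hα _ hx2))
  have hz4 := not_not.1 hz3
  rw [Perm.mul_apply] at hz4
  have v1 : M.σ.SameCycle d₀ (M.σ (M.α z)) := by
    refine huniq _ ⟨_, hz4, SameCycle.refl _ _⟩ ⟨M.α z, ?_, sameCycle_apply_left.2 (SameCycle.refl _ _)⟩
    exact Finset.mem_compl.2 (hα' _ hz2)
  have v2 : M.σ.SameCycle d₀ (M.σ x) := sameCycle_apply_right.2 (hs'.trans hx1)
  have := hns (M.σ x) (M.σ (M.α z)) (v2.symm.trans v1)
    (hz1.trans (SameCycle.apply_right (M.σ * M.α) z))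
  exact hx3 (this ▸ hz4)

theorem RMap.pmap_of_not_separable (h : ¬ M.Separable) : PMap M.σ M.α :=
  ⟨M.inv, M.fpf, M.conn', M.euler', by_contra fun hn => h (M.separable_of_not_nsep hn)⟩

end separable

section period
variable {D : Type}

theorem pow_eq_of_step {f g : Perm D} {x : D} {n : ℕ}
    (h : ∀ i < n, f ((g ^ i) x) = (g ^ (i + 1)) x) : ∀ k ≤ n, (f ^ k) x = (g ^ k) x := by
  intro k
  induction k with
  | zero => intro _; rfl
  | succ k ih => intro hk; rw [pow_succ', Perm.mul_apply, ih (by omega), h k (by omega)]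

theorem SameCycle.iff_of_forall [Finite D] {g : Perm D} (p : D → Prop) (h : ∀ d, p d → p (g d))
    {x y : D} (hxy : g.SameCycle x y) : p x ↔ p y :=
  iff_of_eq (SameCycle.map_eq p (fun z => propext (forall_iff_of_forall_imp h z)) hxy)

/-- The length of the cycle of `x`. -/
noncomputable def per (f : Perm D) (x : D) : ℕ := Function.minimalPeriod f x

theorem pow_per (f : Perm D) (x : D) : (f ^ per f x) x = x := by
  rw [← iterate_eq_pow]; exact Function.iterate_minimalPeriod

theorem per_pos [Finite D] (f : Perm D) (x : D) : 0 < per f x :=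
  Function.minimalPeriod_pos_of_mem_periodicPts
    ⟨orderOf f, orderOf_pos f, by
      rw [Function.IsPeriodicPt, Function.IsFixedPt, iterate_eq_pow, pow_orderOf_eq_one]; rfl⟩

theorem per_le {f : Perm D} {x : D} {k : ℕ} (hk : 0 < k) (h : (f ^ k) x = x) : per f x ≤ k :=
  Function.IsPeriodicPt.minimalPeriod_le hk (by
    rw [Function.IsPeriodicPt, Function.IsFixedPt, iterate_eq_pow, h])

theorem pow_inj_of_lt_per {f : Perm D} {x : D} {k l : ℕ} (hk : k < per f x) (hl : l < per f x)
    (h : (f ^ k) x = (f ^ l) x) : k = l :=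
  Function.iterate_injOn_Iio_minimalPeriod (f := f) (x := x) hk hl (by
    simp only [iterate_eq_pow, h])

theorem SameCycle.exists_lt_per [Finite D] {f : Perm D} {x y : D} (h : f.SameCycle x y) :
    ∃ k < per f x, (f ^ k) x = y := by
  obtain ⟨i, rfl⟩ := h.exists_nat_pow_eq
  refine ⟨i % per f x, Nat.mod_lt _ (per_pos f x), ?_⟩
  rw [← iterate_eq_pow, ← iterate_eq_pow, per, Function.iterate_mod_minimalPeriod_eq]

theorem SameCycle.pow_right (f : Perm D) (x : D) (k : ℕ) : f.SameCycle x ((f ^ k) x) :=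
  sameCycle_pow_right.2 (SameCycle.refl _ _)

theorem per_congr {D' : Type} {f : Perm D} {f' : Perm D'} (e : D ≃ D')
    (h : ∀ x, e (f x) = f' (e x)) (x : D) : per f x = per f' (e x) := by
  have hk : ∀ k : ℕ, e (f^[k] x) = f'^[k] (e x) := by
    intro k
    induction k with
    | zero => rfl
    | succ k ih => rw [Function.iterate_succ_apply', Function.iterate_succ_apply', h, ih]
  refine Function.minimalPeriod_eq_minimalPeriod_iff.2 fun n => ?_
  rw [Function.IsPeriodicPt, Function.IsPeriodicPt, Function.IsFixedPt, Function.IsFixedPt, ← hk]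
  exact e.injective.eq_iff.symm

end period

section cut
variable {D : Type}

/-- A pair of disjoint nonseparable planar maps, living on the parts `S` and `Sᶜ` of the darts, with
the corners needed to glue them. -/
structure Cut (σ α : Perm D) (S : D → Prop) (a b c : D) : Prop where
  inv : ∀ x, α (α x) = x
  fpf : ∀ x, α x ≠ x
  Sσ : ∀ x, S x → S (σ x)
  Sα : ∀ x, S x → S (α x)
  hb : S b
  ha : ¬ S a
  hq : σ a ≠ a
  hcb : c ≠ b
  hbc : (σ * α).SameCycle b c
  ns : NSep σ α
  conn : ∀ p : D → Prop, (∀ d, p d → p (σ d)) → (∀ d, p d → p (α d)) →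
    ∀ x y, (S x ↔ S y) → p x → p y
  euler : 2 * (nc σ + nc (σ * α)) = Nat.card D + 8

/-- The four-cycle by which two disjoint maps are glued in series. -/
def glue [DecidableEq D] (a b c q : D) : Perm D := swap c q * swap a b * swap a q

variable [Fintype D] [DecidableEq D]

theorem glue_mul (a b c q : D) (σ : Perm D) :
    glue a b c q * σ = swap c q * (swap a b * (swap a q * σ)) := by
  simp [glue, mul_assoc]

namespace Cut
variable {σ α : Perm D} {S : D → Prop} {a b c : D} (H : Cut σ α S a b c)
include H

theorem Sσ_iff (x : D) : S (σ x) ↔ S x := forall_iff_of_forall_imp H.Sσ x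

theorem Sα_iff (x : D) : S (α x) ↔ S x := forall_iff_of_forall_imp H.Sα x

theorem S_of_sameCycle {x y : D} (h : σ.SameCycle x y) : S x ↔ S y :=
  iff_of_eq (SameCycle.map_eq S (fun z => propext (H.Sσ_iff z)) h)

theorem S_of_sameFace {x y : D} (h : (σ * α).SameCycle x y) : S x ↔ S y :=
  iff_of_eq (SameCycle.map_eq S (fun z => propext ((H.Sσ_iff (α z)).trans (H.Sα_iff z))) h)

theorem hc : S c := (H.S_of_sameFace H.hbc).1 H.hb

theorem nSq : ¬ S (σ a) := fun h => H.ha ((H.Sσ_iff a).1 h)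

omit [Fintype D] [DecidableEq D] H in
theorem ne_of_S {x y : D} (hx : S x) (hy : ¬ S y) : x ≠ y := fun h => hy (h ▸ hx)

theorem hab : a ≠ b := (ne_of_S H.hb H.ha).symm
theorem hac : a ≠ c := (ne_of_S H.hc H.ha).symm
theorem hqb : σ a ≠ b := (ne_of_S H.hb H.nSq).symm
theorem hqc : σ a ≠ c := (ne_of_S H.hc H.nSq).symm

theorem glue_a : glue a b c (σ a) a = c := by
  rw [glue, Perm.mul_apply, Perm.mul_apply, swap_apply_left,
    swap_apply_of_ne_of_ne H.hq H.hqb, swap_apply_right]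

theorem glue_q : glue a b c (σ a) (σ a) = b := by
  rw [glue, Perm.mul_apply, Perm.mul_apply, swap_apply_right, swap_apply_left,
    swap_apply_of_ne_of_ne H.hcb.symm H.hqb.symm]

theorem glue_b : glue a b c (σ a) b = a := by
  rw [glue, Perm.mul_apply, Perm.mul_apply, swap_apply_of_ne_of_ne H.hab.symm H.hqb.symm,
    swap_apply_right, swap_apply_of_ne_of_ne H.hac H.hq.symm]

theorem glue_c : glue a b c (σ a) c = σ a := by
  rw [glue, Perm.mul_apply, Perm.mul_apply, swap_apply_of_ne_of_ne H.hac.symm H.hqc.symm,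
    swap_apply_of_ne_of_ne H.hac.symm H.hcb, swap_apply_left]

omit [Fintype D] H in
theorem glue_of_ne {q x : D} (h1 : x ≠ a) (h2 : x ≠ b) (h3 : x ≠ c) (h4 : x ≠ q) :
    glue a b c q x = x := by
  rw [glue, Perm.mul_apply, Perm.mul_apply, swap_apply_of_ne_of_ne h1 h4,
    swap_apply_of_ne_of_ne h1 h2, swap_apply_of_ne_of_ne h3 h4]

theorem apply_root : (glue a b c (σ a) * σ) a = b := by
  rw [Perm.mul_apply, H.glue_q]

theorem not_face_aq : ¬ (σ * α).SameCycle a (σ a) := fun h =>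
  H.hq (H.ns _ _ (SameCycle.apply_right σ a) h).symm

theorem fixed1 : (swap a (σ a) * σ) a = a := by simp

theorem not1 : ¬ (swap a (σ a) * σ).SameCycle a b := fun h =>
  H.ha ((H.S_of_sameCycle (SameCycle.of_swap_mul_of_sameCycle (SameCycle.apply_right σ a) h)).2 H.hb)

theorem eq_of_sameCycle_swap {x : D} (h : (swap a (σ a) * σ).SameCycle x a) : x = a :=
  h.eq_of_right H.fixed1

theorem of_swap_swap {x y : D} (h : (swap a b * (swap a (σ a) * σ)).SameCycle x y) :
    (swap a (σ a) * σ).SameCycle x y ∨ (x = a ∧ (swap a (σ a) * σ).SameCycle y b) ∨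
      ((swap a (σ a) * σ).SameCycle x b ∧ y = a) := by
  rcases SameCycle.join_of_swap_mul h with h | ⟨h, h'⟩ | ⟨h, h'⟩
  · exact Or.inl h
  · exact Or.inr (Or.inl ⟨H.eq_of_sameCycle_swap h, h'⟩)
  · exact Or.inr (Or.inr ⟨h, H.eq_of_sameCycle_swap h'⟩)

theorem sameCycle_of_swap {x y : D} (h : (swap a (σ a) * σ).SameCycle x y) : σ.SameCycle x y :=
  SameCycle.of_swap_mul_of_sameCycle (SameCycle.apply_right σ a) h

theorem sameCycle_c_of_swap_swap {x : D} (h : (swap a b * (swap a (σ a) * σ)).SameCycle x c) :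
    σ.SameCycle x c ∨ x = a ∧ σ.SameCycle c b := by
  rcases H.of_swap_swap h with h | ⟨h, h'⟩ | ⟨-, h⟩
  · exact Or.inl (H.sameCycle_of_swap h)
  · exact Or.inr ⟨h, H.sameCycle_of_swap h'⟩
  · exact absurd h.symm H.hac

theorem not_vertex_bc : ¬ σ.SameCycle c b := fun h => H.hcb (H.ns _ _ h H.hbc.symm)

theorem sameCycle_q_of_swap_swap {x : D} (h : (swap a b * (swap a (σ a) * σ)).SameCycle x (σ a)) :
    σ.SameCycle x (σ a) ∧ x ≠ a := by
  rcases H.of_swap_swap h with h | ⟨-, h⟩ | ⟨-, h⟩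
  · refine ⟨H.sameCycle_of_swap h, ?_⟩
    rintro rfl
    exact H.hq (H.eq_of_sameCycle_swap h.symm)
  · exact absurd ((H.S_of_sameCycle (H.sameCycle_of_swap h)).2 H.hb) H.nSq
  · exact absurd h H.hq

theorem not2 : ¬ (swap a b * (swap a (σ a) * σ)).SameCycle c (σ a) := fun h =>
  H.nSq ((H.S_of_sameCycle (H.sameCycle_q_of_swap_swap h).1).1 H.hc)

theorem nc_glue : nc (glue a b c (σ a) * σ) + 1 = nc σ := by
  have h1 := nc_swap_mul_of_sameCycle H.hq.symm (SameCycle.apply_right σ a)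
  have h2 := nc_swap_mul_of_not H.not1
  have h3 := nc_swap_mul_of_not H.not2
  rw [glue_mul]
  omega

/-- The vertices of the glued map. -/
theorem vertex {x y : D} (h : (glue a b c (σ a) * σ).SameCycle x y) :
    σ.SameCycle x y ∨ (x = a ∧ σ.SameCycle y b) ∨ (σ.SameCycle x b ∧ y = a) ∨
      (σ.SameCycle x c ∧ σ.SameCycle y (σ a) ∧ y ≠ a) ∨
      (σ.SameCycle x (σ a) ∧ σ.SameCycle y c ∧ x ≠ a) := by
  rw [glue_mul] at h
  have hc : ∀ {x}, (swap a b * (swap a (σ a) * σ)).SameCycle x c → σ.SameCycle x c := fun h =>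
    (H.sameCycle_c_of_swap_swap h).resolve_right fun h => H.not_vertex_bc h.2
  rcases SameCycle.join_of_swap_mul h with h | ⟨h, h'⟩ | ⟨h, h'⟩
  · rcases H.of_swap_swap h with h | ⟨h, h'⟩ | ⟨h, h'⟩
    · exact Or.inl (H.sameCycle_of_swap h)
    · exact Or.inr (Or.inl ⟨h, H.sameCycle_of_swap h'⟩)
    · exact Or.inr (Or.inr (Or.inl ⟨H.sameCycle_of_swap h, h'⟩))
  · exact Or.inr (Or.inr (Or.inr (Or.inl ⟨hc h, H.sameCycle_q_of_swap_swap h'⟩)))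
  · exact Or.inr (Or.inr (Or.inr (Or.inr ⟨(H.sameCycle_q_of_swap_swap h).1, hc h', (H.sameCycle_q_of_swap_swap h).2⟩)))

theorem vertex_cq : (glue a b c (σ a) * σ).SameCycle c (σ a) := by
  rw [glue_mul]; exact sameCycle_swap_mul_of_not H.not2

theorem notf1 : ¬ (swap a (σ a) * (σ * α)).SameCycle a b := fun h => by
  rcases SameCycle.join_of_swap_mul h with h | ⟨-, h⟩ | ⟨-, h⟩
  · exact H.ha ((H.S_of_sameFace h).2 H.hb)
  · exact H.nSq ((H.S_of_sameFace h).1 H.hb)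
  · exact H.ha ((H.S_of_sameFace h).1 H.hb)

theorem nc_glue_face : nc (glue a b c (σ a) * σ * α) + 1 = nc (σ * α) := by
  have h1 := nc_swap_mul_of_not H.not_face_aq
  have h2 := nc_swap_mul_of_not H.notf1
  have k1 := sameCycle_swap_mul_of_not H.not_face_aq
  have k2 := sameCycle_swap_mul_of_not H.notf1
  have h3 := nc_swap_mul_of_sameCycle H.hqc.symm
    (g := swap a b * (swap a (σ a) * (σ * α)))
    (((SameCycle.of_swap_mul k2 (SameCycle.of_swap_mul k1 H.hbc)).symm.trans k2.symm).trans
      (SameCycle.of_swap_mul k2 k1))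
  rw [mul_assoc, glue_mul]
  omega

theorem euler_glue : 2 * (nc (glue a b c (σ a) * σ) + nc (glue a b c (σ a) * σ * α)) =
    Nat.card D + 4 := by
  have := H.nc_glue
  have := H.nc_glue_face
  have := H.euler
  omega

section index
variable {j : ℕ} (hj : j < per (σ * α) b) (hjc : ((σ * α) ^ j) b = c)
include hj hjc

omit [Fintype D] [DecidableEq D] hj in
theorem index_pos : 0 < j := by
  rcases Nat.eq_zero_or_pos j with rfl | h
  · exact absurd hjc.symm H.hcb
  · exact h

theorem face_step {x : D} (h1 : (σ * α) x ≠ a) (h2 : (σ * α) x ≠ b) (h3 : (σ * α) x ≠ c)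
    (h4 : (σ * α) x ≠ σ a) : (glue a b c (σ a) * σ * α) x = (σ * α) x := by
  rw [mul_assoc, Perm.mul_apply, glue_of_ne h1 h2 h3 h4]

theorem S_pow (k : ℕ) : S (((σ * α) ^ k) b) :=
  (H.S_of_sameFace (SameCycle.pow_right _ b k)).1 H.hb

theorem step_b {k : ℕ} (h1 : k + 1 ≠ j) (h2 : k + 1 < per (σ * α) b) :
    (glue a b c (σ a) * σ * α) (((σ * α) ^ k) b) = ((σ * α) ^ (k + 1)) b := by
  have e : (σ * α) (((σ * α) ^ k) b) = ((σ * α) ^ (k + 1)) b := by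
    rw [pow_succ', Perm.mul_apply (σ * α)]
  have hS := H.S_pow hj hjc (k + 1)
  rw [H.face_step hj hjc, e] <;> rw [e]
  · exact ne_of_S hS H.ha
  · intro h
    have := pow_inj_of_lt_per (l := 0) h2 (by omega) h
    omega
  · intro h
    rw [← hjc] at h
    exact h1 (pow_inj_of_lt_per h2 hj h)
  · exact ne_of_S hS H.nSq

theorem step_a {k : ℕ} (h2 : k + 1 < per (σ * α) a) :
    (glue a b c (σ a) * σ * α) (((σ * α) ^ k) a) = ((σ * α) ^ (k + 1)) a := by
  have e : (σ * α) (((σ * α) ^ k) a) = ((σ * α) ^ (k + 1)) a := by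
    rw [pow_succ', Perm.mul_apply (σ * α)]
  have hs := SameCycle.pow_right (σ * α) a (k + 1)
  have hS : ¬ S (((σ * α) ^ (k + 1)) a) := fun h => H.ha ((H.S_of_sameFace hs).2 h)
  rw [H.face_step hj hjc, e] <;> rw [e]
  · intro h
    have := pow_inj_of_lt_per (l := 0) h2 (by omega) h
    omega
  · exact (ne_of_S H.hb hS).symm
  · exact (ne_of_S H.hc hS).symm
  · intro h
    rw [h] at hs
    exact H.not_face_aq hs

theorem pow_b {k : ℕ} (hk : k < j) :
    ((glue a b c (σ a) * σ * α) ^ k) b = ((σ * α) ^ k) b :=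
  pow_eq_of_step (n := k) (fun i hi => H.step_b hj hjc (by omega) (by omega)) k le_rfl

theorem pow_b_eq : ((glue a b c (σ a) * σ * α) ^ j) b = σ a := by
  have h0 := H.index_pos hjc
  obtain ⟨i, rfl⟩ : ∃ i, j = i + 1 := ⟨j - 1, by omega⟩
  rw [pow_succ', Perm.mul_apply, H.pow_b hj hjc (by omega), mul_assoc, Perm.mul_apply,
    ← Perm.mul_apply (σ * α), ← pow_succ', hjc, H.glue_c]

theorem pow_c {k : ℕ} (hk : k < per (σ * α) b - j) :
    ((glue a b c (σ a) * σ * α) ^ k) c = ((σ * α) ^ (j + k)) b := by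
  have : ((σ * α) ^ (j + k)) b = ((σ * α) ^ k) c := by
    rw [add_comm, pow_add, Perm.mul_apply, hjc]
  rw [this]
  refine pow_eq_of_step (n := k) (fun i hi => ?_) k le_rfl
  have e : ∀ i, ((σ * α) ^ i) c = ((σ * α) ^ (i + j)) b := by
    intro i; rw [pow_add, Perm.mul_apply, hjc]
  rw [e, e, H.step_b hj hjc (by omega) (by omega)]
  congr 2; omega

theorem pow_c_eq : ((glue a b c (σ a) * σ * α) ^ (per (σ * α) b - j)) c = a := by
  obtain ⟨i, hi⟩ : ∃ i, per (σ * α) b - j = i + 1 := ⟨per (σ * α) b - j - 1, by omega⟩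
  have : j + i + 1 = per (σ * α) b := by omega
  rw [hi, pow_succ', Perm.mul_apply, H.pow_c hj hjc (by omega), mul_assoc, Perm.mul_apply,
    ← Perm.mul_apply (σ * α), ← pow_succ', this, pow_per, H.glue_b]

theorem pow_a {k : ℕ} (hk : k < per (σ * α) a) :
    ((glue a b c (σ a) * σ * α) ^ k) a = ((σ * α) ^ k) a :=
  pow_eq_of_step (n := k) (fun i hi => H.step_a hj hjc (by omega)) k le_rfl

theorem pow_a_eq : ((glue a b c (σ a) * σ * α) ^ (per (σ * α) a)) a = c := by
  have h0 := per_pos (σ * α) a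
  obtain ⟨i, hi⟩ : ∃ i, per (σ * α) a = i + 1 := ⟨per (σ * α) a - 1, by omega⟩
  rw [hi, pow_succ', Perm.mul_apply, H.pow_a hj hjc (by omega), mul_assoc, Perm.mul_apply,
    ← Perm.mul_apply (σ * α), ← pow_succ', ← hi, pow_per, H.glue_a]

theorem per_glue : per (glue a b c (σ a) * σ * α) a =
    per (σ * α) a + (per (σ * α) b - j) := by
  have h0 := per_pos (σ * α) a
  refine le_antisymm (per_le (by omega) ?_) (not_lt.1 fun hlt => ?_)
  · rw [add_comm, pow_add, Perm.mul_apply, H.pow_a_eq hj hjc, H.pow_c_eq hj hjc]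
  · have hp := pow_per (glue a b c (σ a) * σ * α) a
    have hpos := per_pos (glue a b c (σ a) * σ * α) a
    generalize per (glue a b c (σ a) * σ * α) a = k at *
    by_cases hk : k < per (σ * α) a
    · rw [H.pow_a hj hjc hk] at hp
      have := pow_inj_of_lt_per (l := 0) hk h0 hp
      omega
    · obtain ⟨i, rfl⟩ : ∃ i, k = i + per (σ * α) a := ⟨k - per (σ * α) a, by omega⟩
      rw [pow_add, Perm.mul_apply, H.pow_a_eq hj hjc, H.pow_c hj hjc (by omega)] at hp
      exact H.ha (hp ▸ H.S_pow hj hjc _)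

end index

end Cut
end cut

section cut
variable {D : Type} [Fintype D] [DecidableEq D]

namespace Cut

/-- The face of the glued map containing the root. -/
def FA (σ α : Perm D) (a b : D) (j : ℕ) (x : D) : Prop :=
  (σ * α).SameCycle x a ∨ ∃ k, j ≤ k ∧ k < per (σ * α) b ∧ ((σ * α) ^ k) b = x

/-- The face of the glued map containing the successor of the root. -/
def FB (σ α : Perm D) (a b : D) (j : ℕ) (x : D) : Prop :=
  (σ * α).SameCycle x (σ a) ∨ ∃ k, k < j ∧ ((σ * α) ^ k) b = x

variable {σ α : Perm D} {S : D → Prop} {a b c : D} (H : Cut σ α S a b c)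
include H
variable {j : ℕ} (hj : j < per (σ * α) b) (hjc : ((σ * α) ^ j) b = c)
include hj hjc

theorem FA_step {x : D} (h : FA σ α a b j x) : FA σ α a b j ((glue a b c (σ a) * σ * α) x) := by
  have hx := SameCycle.apply_right (σ * α) x
  rcases h with h | ⟨k, h1, h2, rfl⟩
  · have hya := hx.symm.trans h
    have hnS : ¬ S ((σ * α) x) := fun h' => H.ha ((H.S_of_sameFace hya).1 h')
    by_cases hy : (σ * α) x = a
    · rw [mul_assoc, Perm.mul_apply, hy, H.glue_a]
      exact Or.inr ⟨j, le_rfl, hj, hjc⟩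
    · rw [H.face_step hj hjc hy (ne_of_S H.hb hnS).symm (ne_of_S H.hc hnS).symm
        (fun h' => H.not_face_aq (h' ▸ hya.symm))]
      exact Or.inl hya
  · by_cases hk : k + 1 = per (σ * α) b
    · left
      rw [mul_assoc, Perm.mul_apply, ← Perm.mul_apply (σ * α), ← pow_succ', hk, pow_per, H.glue_b]
    · rw [H.step_b hj hjc (by omega) (by omega)]
      exact Or.inr ⟨k + 1, by omega, by omega, rfl⟩

theorem FB_step {x : D} (h : FB σ α a b j x) : FB σ α a b j ((glue a b c (σ a) * σ * α) x) := by
  have hx := SameCycle.apply_right (σ * α) x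
  rcases h with h | ⟨k, h1, rfl⟩
  · have hya := hx.symm.trans h
    have hnS : ¬ S ((σ * α) x) := fun h' => H.nSq ((H.S_of_sameFace hya).1 h')
    by_cases hy : (σ * α) x = σ a
    · rw [mul_assoc, Perm.mul_apply, hy, H.glue_q]
      exact Or.inr ⟨0, H.index_pos hjc, rfl⟩
    · rw [H.face_step hj hjc (fun h' => H.not_face_aq (by rwa [h'] at hya)) (ne_of_S H.hb hnS).symm
        (ne_of_S H.hc hnS).symm hy]
      exact Or.inl hya
  · by_cases hk : k + 1 = j
    · left
      rw [mul_assoc, Perm.mul_apply, ← Perm.mul_apply (σ * α), ← pow_succ', hk, hjc, H.glue_c]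
    · rw [H.step_b hj hjc hk (by omega)]
      exact Or.inr ⟨k + 1, by omega, rfl⟩

theorem FA_iff {x y : D} (h : (glue a b c (σ a) * σ * α).SameCycle x y) :
    FA σ α a b j x ↔ FA σ α a b j y :=
  SameCycle.iff_of_forall (fun z => FA σ α a b j z) (fun _ hz => H.FA_step hj hjc hz) h

theorem FB_iff {x y : D} (h : (glue a b c (σ a) * σ * α).SameCycle x y) :
    FB σ α a b j x ↔ FB σ α a b j y :=
  SameCycle.iff_of_forall (fun z => FB σ α a b j z) (fun _ hz => H.FB_step hj hjc hz) h

theorem face_cover {x : D} (h : (σ * α).SameCycle b x) : FA σ α a b j x ∨ FB σ α a b j x := by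
  obtain ⟨k, hk, rfl⟩ := SameCycle.exists_lt_per h
  by_cases h' : k < j
  · exact Or.inr (Or.inr ⟨k, h', rfl⟩)
  · exact Or.inl (Or.inr ⟨k, by omega, hk, rfl⟩)

/-- The faces of the glued map. -/
theorem face {x y : D} (h : (glue a b c (σ a) * σ * α).SameCycle x y) :
    (σ * α).SameCycle x y ∨ (FA σ α a b j x ∧ FA σ α a b j y) ∨
      (FB σ α a b j x ∧ FB σ α a b j y) := by
  by_cases hA : FA σ α a b j x
  · exact Or.inr (Or.inl ⟨hA, (H.FA_iff hj hjc h).1 hA⟩)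
  by_cases hB : FB σ α a b j x
  · exact Or.inr (Or.inr ⟨hB, (H.FB_iff hj hjc h).1 hB⟩)
  left
  have key : ∀ z, (¬ FA σ α a b j z ∧ ¬ FB σ α a b j z ∧ (σ * α).SameCycle x z) →
      (¬ FA σ α a b j ((glue a b c (σ a) * σ * α) z) ∧
        ¬ FB σ α a b j ((glue a b c (σ a) * σ * α) z) ∧
          (σ * α).SameCycle x ((glue a b c (σ a) * σ * α) z)) := by
    rintro z ⟨h1, h2, h3⟩
    have hs := SameCycle.apply_right (glue a b c (σ a) * σ * α) z
    have hz := SameCycle.apply_right (σ * α) z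
    refine ⟨fun h => h1 ((H.FA_iff hj hjc hs).2 h), fun h => h2 ((H.FB_iff hj hjc hs).2 h), ?_⟩
    rw [H.face_step hj hjc]
    · exact h3.trans hz
    · intro h; exact h1 (Or.inl (h ▸ hz))
    · intro h
      rw [h] at hz
      rcases H.face_cover hj hjc hz.symm with h | h
      exacts [h1 h, h2 h]
    · intro h
      rw [h] at hz
      rcases H.face_cover hj hjc (H.hbc.trans hz.symm) with h | h
      exacts [h1 h, h2 h]
    · intro h; exact h2 (Or.inl (h ▸ hz))
  exact ((SameCycle.iff_of_forall (fun z => ¬ FA σ α a b j z ∧ ¬ FB σ α a b j z ∧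
    (σ * α).SameCycle x z) key h).1 ⟨hA, hB, SameCycle.refl _ _⟩).2.2

theorem FA_inside {x : D} (h : FA σ α a b j x) (hS : S x) :
    ∃ k, j ≤ k ∧ k < per (σ * α) b ∧ ((σ * α) ^ k) b = x :=
  h.resolve_left fun h => H.ha ((H.S_of_sameFace h).1 hS)

theorem FA_outside {x : D} (h : FA σ α a b j x) (hS : ¬ S x) : (σ * α).SameCycle x a :=
  h.resolve_right fun ⟨k, _, _, hk⟩ => hS (hk ▸ H.S_pow hj hjc k)

theorem FB_inside {x : D} (h : FB σ α a b j x) (hS : S x) : ∃ k, k < j ∧ ((σ * α) ^ k) b = x :=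
  h.resolve_left fun h => H.nSq ((H.S_of_sameFace h).1 hS)

theorem FB_outside {x : D} (h : FB σ α a b j x) (hS : ¬ S x) : (σ * α).SameCycle x (σ a) :=
  h.resolve_right fun ⟨k, _, hk⟩ => hS (hk ▸ H.S_pow hj hjc k)

theorem sameFace_of_FA {x y : D} (hx : FA σ α a b j x) (hy : FA σ α a b j y) (h : S x ↔ S y) :
    (σ * α).SameCycle x y := by
  by_cases hS : S x
  · obtain ⟨k, -, -, rfl⟩ := H.FA_inside hj hjc hx hS
    obtain ⟨l, -, -, rfl⟩ := H.FA_inside hj hjc hy (h.1 hS)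
    exact (SameCycle.pow_right _ b k).symm.trans (SameCycle.pow_right _ b l)
  · exact (H.FA_outside hj hjc hx hS).trans (H.FA_outside hj hjc hy (fun h' => hS (h.2 h'))).symm

theorem sameFace_of_FB {x y : D} (hx : FB σ α a b j x) (hy : FB σ α a b j y) (h : S x ↔ S y) :
    (σ * α).SameCycle x y := by
  by_cases hS : S x
  · obtain ⟨k, -, rfl⟩ := H.FB_inside hj hjc hx hS
    obtain ⟨l, -, rfl⟩ := H.FB_inside hj hjc hy (h.1 hS)
    exact (SameCycle.pow_right _ b k).symm.trans (SameCycle.pow_right _ b l)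
  · exact (H.FB_outside hj hjc hx hS).trans (H.FB_outside hj hjc hy (fun h' => hS (h.2 h'))).symm

theorem nsep_a {y : D} (hy : σ.SameCycle y b)
    (hf : (glue a b c (σ a) * σ * α).SameCycle a y) : False := by
  have hS : S y := (H.S_of_sameCycle hy).2 H.hb
  rcases H.face hj hjc hf with h | ⟨-, h⟩ | ⟨h, -⟩
  · exact H.ha ((H.S_of_sameFace h).2 hS)
  · obtain ⟨k, h1, h2, rfl⟩ := H.FA_inside hj hjc h hS
    have := H.ns _ _ hy (SameCycle.pow_right _ b k).symm
    have := pow_inj_of_lt_per (l := 0) h2 (by omega) this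
    have := H.index_pos hjc
    omega
  · exact H.not_face_aq (H.FB_outside hj hjc h H.ha)

theorem nsep_cq {x y : D} (hx : σ.SameCycle x c) (hy : σ.SameCycle y (σ a)) (hya : y ≠ a)
    (hf : (glue a b c (σ a) * σ * α).SameCycle x y) : False := by
  have hSx : S x := (H.S_of_sameCycle hx).2 H.hc
  have hSy : ¬ S y := fun h => H.nSq ((H.S_of_sameCycle hy).1 h)
  rcases H.face hj hjc hf with h | ⟨-, h⟩ | ⟨h, -⟩
  · exact hSy ((H.S_of_sameFace h).1 hSx)
  · exact hya (H.ns _ _ (hy.trans (SameCycle.apply_right σ a).symm) (H.FA_outside hj hjc h hSy))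
  · obtain ⟨k, h1, rfl⟩ := H.FB_inside hj hjc h hSx
    have := H.ns _ _ hx ((SameCycle.pow_right _ b k).symm.trans H.hbc)
    rw [← hjc] at this
    have := pow_inj_of_lt_per (by omega) hj this
    omega

theorem nsep_glue : NSep (glue a b c (σ a) * σ) α := by
  intro x y hv hf
  rcases H.vertex hv with h | ⟨rfl, h⟩ | ⟨h, rfl⟩ | ⟨h1, h2, h3⟩ | ⟨h1, h2, h3⟩
  · rcases H.face hj hjc hf with h' | ⟨h1, h2⟩ | ⟨h1, h2⟩
    · exact H.ns _ _ h h'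
    · exact H.ns _ _ h (H.sameFace_of_FA hj hjc h1 h2 (H.S_of_sameCycle h))
    · exact H.ns _ _ h (H.sameFace_of_FB hj hjc h1 h2 (H.S_of_sameCycle h))
  · exact (H.nsep_a hj hjc h hf).elim
  · exact (H.nsep_a hj hjc h hf.symm).elim
  · exact (H.nsep_cq hj hjc h1 h2 h3 hf).elim
  · exact (H.nsep_cq hj hjc h2 h1 h3 hf.symm).elim

theorem face_ca : (glue a b c (σ a) * σ * α).SameCycle c a := by
  have := SameCycle.pow_right (glue a b c (σ a) * σ * α) c (per (σ * α) b - j)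
  rwa [H.pow_c_eq hj hjc] at this

/-- Predicates invariant under the glued map are invariant under the pieces. -/
theorem closed_of_glue {p : D → Prop} (h1 : ∀ d, p d → p ((glue a b c (σ a) * σ) d))
    (h2 : ∀ d, p d → p (α d)) : (∀ d, p d → p (σ d)) ∧ (p b ↔ p a) := by
  have i1 : ∀ {x y}, (glue a b c (σ a) * σ).SameCycle x y → (p x ↔ p y) := fun h =>
    SameCycle.iff_of_forall p h1 h
  have i2 : ∀ {x y}, (glue a b c (σ a) * σ * α).SameCycle x y → (p x ↔ p y) := fun h =>
    SameCycle.iff_of_forall p (fun d hd => h1 (α d) (h2 d hd)) h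
  have ab : p a ↔ p b := by
    have := SameCycle.apply_right (glue a b c (σ a) * σ) a
    rw [H.apply_root] at this
    exact i1 this
  have cq := i1 H.vertex_cq
  have ca := i2 (H.face_ca hj hjc)
  refine ⟨fun d hd => ?_, ab.symm⟩
  have hd' := h1 d hd
  rw [Perm.mul_apply] at hd'
  generalize σ d = e at hd'
  by_cases e1 : e = a
  · subst e1; rw [H.glue_a] at hd'; exact ca.1 hd'
  by_cases e2 : e = b
  · subst e2; rw [H.glue_b] at hd'; exact ab.1 hd'
  by_cases e3 : e = c
  · subst e3; rw [H.glue_c] at hd'; exact cq.2 hd'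
  by_cases e4 : e = σ a
  · subst e4; rw [H.glue_q] at hd'; exact cq.1 (ca.2 (ab.2 hd'))
  rwa [glue_of_ne e1 e2 e3 e4] at hd'

theorem conn_glue : Conn (glue a b c (σ a) * σ) α := by
  intro p h1 h2 x y hx
  obtain ⟨h0, hba⟩ := H.closed_of_glue hj hjc h1 h2
  have k : ∀ x, p x ↔ p a := by
    intro x
    by_cases hS : S x
    · exact ⟨fun h => hba.1 (H.conn p h0 h2 x b (by simp [hS, H.hb]) h),
        fun h => H.conn p h0 h2 b x (by simp [hS, H.hb]) (hba.2 h)⟩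
    · exact ⟨H.conn p h0 h2 x a (by simp [hS, H.ha]), H.conn p h0 h2 a x (by simp [hS, H.ha])⟩
  exact (k y).2 ((k x).1 hx)

theorem pmap : PMap (glue a b c (σ a) * σ) α :=
  ⟨H.inv, H.fpf, H.conn_glue hj hjc, H.euler_glue, H.nsep_glue hj hjc⟩

/-- The end of the inserted map is the first vertex shared by the two faces. -/
theorem first_hit {k : ℕ} (h0 : 0 < k) (hk : k < j) {x : D}
    (hv : (glue a b c (σ a) * σ).SameCycle x (((glue a b c (σ a) * σ * α) ^ k) b))
    (hf : (glue a b c (σ a) * σ * α).SameCycle x a) : False := by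
  rw [H.pow_b hj hjc hk] at hv
  have hFA : FA σ α a b j x := (H.FA_iff hj hjc hf).2 (Or.inl (SameCycle.refl _ _))
  have hS := H.S_pow hj hjc k
  have hb := SameCycle.pow_right (σ * α) b k
  rcases H.vertex hv with h | ⟨-, h⟩ | ⟨-, h⟩ | ⟨-, h, -⟩ | ⟨-, h, -⟩
  · obtain ⟨l, h1, h2, rfl⟩ := H.FA_inside hj hjc hFA ((H.S_of_sameCycle h).2 hS)
    have := H.ns _ _ h ((SameCycle.pow_right _ b l).symm.trans hb)
    have := pow_inj_of_lt_per h2 (by omega) this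
    omega
  · have := H.ns _ _ h hb.symm
    have := pow_inj_of_lt_per (l := 0) (by omega) (by omega) this
    omega
  · exact H.ha (h ▸ hS)
  · exact H.nSq ((H.S_of_sameCycle h).1 hS)
  · have := H.ns _ _ h (hb.symm.trans H.hbc)
    rw [← hjc] at this
    have := pow_inj_of_lt_per (by omega) hj this
    omega

end Cut
end cut

section unique

theorem SameCycle.map_equiv {D D' : Type} [Finite D] {g : Perm D} {g' : Perm D'} (e : D ≃ D')
    (h : ∀ x, e (g x) = g' (e x)) {x y : D} (hxy : g.SameCycle x y) : g'.SameCycle (e x) (e y) :=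
  SameCycle.of_forall (Setoid.comap e (SameCycle.setoid g')) (fun z => by
    change g'.SameCycle (e z) (e (g z))
    rw [h]
    exact SameCycle.apply_right g' (e z)) hxy

theorem pow_map_equiv {D D' : Type} {g : Perm D} {g' : Perm D'} (e : D ≃ D')
    (h : ∀ x, e (g x) = g' (e x)) (x : D) (k : ℕ) : e ((g ^ k) x) = (g' ^ k) (e x) := by
  induction k with
  | zero => rfl
  | succ k ih => rw [pow_succ', pow_succ', Perm.mul_apply, Perm.mul_apply, h, ih]

theorem intertwine_symm {D D' : Type} {g : Perm D} {g' : Perm D'} (e : D ≃ D')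
    (h : ∀ x, e (g x) = g' (e x)) (y : D') : e.symm (g' y) = g (e.symm y) := by
  rw [symm_apply_eq, h, apply_symm_apply]

theorem map_glue {D D' : Type} [DecidableEq D] [DecidableEq D'] (e : D ≃ D') (a b c q z : D) :
    e (glue a b c q z) = glue (e a) (e b) (e c) (e q) (e z) := by
  simp only [glue, Perm.mul_apply, e.injective.map_swap]

variable {D D' : Type} [Fintype D] [DecidableEq D] [Fintype D'] [DecidableEq D']
  {σ α : Perm D} {S : D → Prop} {a b c : D} {σ' α' : Perm D'} {S' : D' → Prop} {a' b' c' : D'}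
  {j j' : ℕ}

namespace Cut

theorem index_not_lt (H : Cut σ α S a b c) (H' : Cut σ' α' S' a' b' c')
    (hj : j < per (σ * α) b) (hjc : ((σ * α) ^ j) b = c)
    (hj' : j' < per (σ' * α') b') (hjc' : ((σ' * α') ^ j') b' = c') (e : D ≃ D')
    (hσ : ∀ x, e ((glue a b c (σ a) * σ) x) = (glue a' b' c' (σ' a') * σ') (e x))
    (hα : ∀ x, e (α x) = α' (e x)) (ha : e a = a') : ¬ j < j' := by
  intro hlt
  have hφ : ∀ x, e ((glue a b c (σ a) * σ * α) x) = (glue a' b' c' (σ' a') * σ' * α') (e x) := by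
    intro x
    rw [Perm.mul_apply, hσ, hα]; rfl
  have hb : e b = b' := by rw [← H.apply_root, hσ, ha, H'.apply_root]
  refine H'.first_hit hj' hjc' (H.index_pos hjc) hlt (x := e c) ?_ ?_
  · have := SameCycle.map_equiv e hσ H.vertex_cq
    rwa [← H.pow_b_eq hj hjc, pow_map_equiv e hφ, hb] at this
  · have := SameCycle.map_equiv e hφ (H.face_ca hj hjc)
    rwa [ha] at this

theorem unique (H : Cut σ α S a b c) (H' : Cut σ' α' S' a' b' c')
    (hj : j < per (σ * α) b) (hjc : ((σ * α) ^ j) b = c)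
    (hj' : j' < per (σ' * α') b') (hjc' : ((σ' * α') ^ j') b' = c') (e : D ≃ D')
    (hσ : ∀ x, e ((glue a b c (σ a) * σ) x) = (glue a' b' c' (σ' a') * σ') (e x))
    (hα : ∀ x, e (α x) = α' (e x)) (ha : e a = a') :
    j = j' ∧ e b = b' ∧ (∀ x, e (σ x) = σ' (e x)) ∧ ∀ x, S x ↔ S' (e x) := by
  have hφ : ∀ x, e ((glue a b c (σ a) * σ * α) x) = (glue a' b' c' (σ' a') * σ' * α') (e x) := by
    intro x
    rw [Perm.mul_apply, hσ, hα]; rfl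
  have hb : e b = b' := by rw [← H.apply_root, hσ, ha, H'.apply_root]
  have hjj : j = j' := by
    have h1 := index_not_lt H H' hj hjc hj' hjc' e hσ hα ha
    have h2 := index_not_lt H' H hj' hjc' hj hjc e.symm (intertwine_symm e hσ)
      (intertwine_symm e hα) (by rw [symm_apply_eq, ha])
    omega
  have hq : e (σ a) = σ' a' := by
    rw [← H.pow_b_eq hj hjc, pow_map_equiv e hφ, hb, hjj, H'.pow_b_eq hj' hjc']
  have hc : e c = c' := by
    refine H'.nsep_glue hj' hjc' _ _ ?_ ?_
    · have := SameCycle.map_equiv e hσ H.vertex_cq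
      rw [hq] at this
      exact this.trans H'.vertex_cq.symm
    · have := SameCycle.map_equiv e hφ (H.face_ca hj hjc)
      rw [ha] at this
      exact this.trans (H'.face_ca hj' hjc').symm
  have hσ0 : ∀ x, e (σ x) = σ' (e x) := by
    intro x
    have := hσ x
    rw [Perm.mul_apply, Perm.mul_apply, map_glue, ha, hb, hc, hq] at this
    exact (glue a' b' c' (σ' a')).injective this
  refine ⟨hjj, hb, hσ0, fun x => ⟨fun hx => ?_, fun hx => by_contra fun hn => ?_⟩⟩
  · exact H.conn (fun z => S' (e z)) (fun d hd => by rw [hσ0]; exact H'.Sσ _ hd)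
      (fun d hd => by rw [hα]; exact H'.Sα _ hd) b x (by simp [hx, H.hb]) (hb ▸ H'.hb)
  · exact H.conn (fun z => ¬ S' (e z)) (fun d hd => by rw [hσ0, H'.Sσ_iff]; exact hd)
      (fun d hd => by rw [hα, H'.Sα_iff]; exact hd) a x (by simp [hn, H.ha]) (ha ▸ H'.ha) hx

end Cut
end unique

section split
variable {D : Type} [Fintype D] [DecidableEq D]

/-- The inverse of the four-cycle `glue`. -/
def unglue (a b c q : D) : Perm D := swap a q * swap a b * swap c q

theorem unglue_mul (a b c q : D) (σ : Perm D) :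
    unglue a b c q * σ = swap a q * (swap a b * (swap c q * σ)) := by
  simp [unglue, mul_assoc]

theorem glue_unglue (a b c q : D) : glue a b c q * unglue a b c q = 1 := by
  ext x
  simp [glue, unglue]

/-- The data of a first vertex `c ∼ q` shared by the faces of `a` and of `b`. -/
structure FirstHit (σ α : Perm D) (a b c q : D) (k : ℕ) : Prop where
  map : PMap σ α
  hb : σ a = b
  hba : b ≠ a
  k_pos : 0 < k
  k_lt : k < per (σ * α) b
  hq : ((σ * α) ^ k) b = q
  hcq : σ.SameCycle c q
  hca : (σ * α).SameCycle c a
  min : ∀ l x, 0 < l → l < k → σ.SameCycle x (((σ * α) ^ l) b) → ¬ (σ * α).SameCycle x a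

namespace FirstHit
variable {σ α : Perm D} {a b c q : D} {k : ℕ} (H : FirstHit σ α a b c q k)
include H

theorem vab : σ.SameCycle a b := by
  have := SameCycle.apply_right σ a
  rwa [H.hb] at this

theorem not_fab : ¬ (σ * α).SameCycle a b := fun h => H.hba (H.map.ns _ _ H.vab h).symm

theorem fbq : (σ * α).SameCycle b q := by
  rw [← H.hq]; exact SameCycle.pow_right _ _ _

theorem ne_of_face {x y : D} (hx : (σ * α).SameCycle b x) (hy : (σ * α).SameCycle y a) : x ≠ y := by
  rintro rfl
  exact H.not_fab (hx.trans hy).symm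

theorem hbq : b ≠ q := by
  intro h
  have := pow_inj_of_lt_per (l := 0) H.k_lt (by have := H.k_lt; omega) (H.hq.trans h.symm)
  have := H.k_pos
  omega

theorem hqa : q ≠ a := H.ne_of_face H.fbq (SameCycle.refl _ _)
theorem hqc : q ≠ c := H.ne_of_face H.fbq H.hca
theorem hbc : b ≠ c := H.ne_of_face (SameCycle.refl _ _) H.hca

theorem hac : a ≠ c := by
  rintro rfl
  exact H.hbq (H.map.ns _ _ (H.vab.symm.trans H.hcq) H.fbq)

theorem unglue_root : (unglue a b c q * σ) a = q := by
  rw [unglue_mul, Perm.mul_apply, Perm.mul_apply, Perm.mul_apply, H.hb,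
    swap_apply_of_ne_of_ne H.hbc H.hbq, swap_apply_right, swap_apply_left]

theorem fixed2 : (swap a b * (swap c q * σ)) a = a := by
  rw [Perm.mul_apply, Perm.mul_apply, H.hb, swap_apply_of_ne_of_ne H.hbc H.hbq, swap_apply_right]

theorem same1 : (swap c q * σ).SameCycle a b := by
  have := SameCycle.apply_right (swap c q * σ) a
  rwa [Perm.mul_apply, H.hb, swap_apply_of_ne_of_ne H.hbc H.hbq] at this

theorem refine2 {x y : D} (h : (swap a b * (swap c q * σ)).SameCycle x y) : σ.SameCycle x y :=
  SameCycle.of_swap_mul_of_sameCycle H.hcq (SameCycle.of_swap_mul_of_sameCycle H.same1 h)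

theorem eq_of_same2 {x : D} (h : (swap a b * (swap c q * σ)).SameCycle x a) : x = a :=
  h.eq_of_right H.fixed2

theorem nc_unglue : nc (unglue a b c q * σ) = nc σ + 1 := by
  have h1 := nc_swap_mul_of_sameCycle H.hqc.symm H.hcq
  have h2 := nc_swap_mul_of_sameCycle H.hba.symm H.same1
  have h3 := nc_swap_mul_of_not (g := swap a b * (swap c q * σ)) (u := a) (v := q)
    (fun h => H.hqa (H.eq_of_same2 h.symm))
  rw [unglue_mul]
  omega

theorem vertex {x y : D} (h : (unglue a b c q * σ).SameCycle x y) :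
    σ.SameCycle x y ∨ (x = a ∧ σ.SameCycle y q) ∨ (σ.SameCycle x q ∧ y = a) := by
  rw [unglue_mul] at h
  rcases SameCycle.join_of_swap_mul h with h | ⟨h, h'⟩ | ⟨h, h'⟩
  · exact Or.inl (H.refine2 h)
  · exact Or.inr (Or.inl ⟨H.eq_of_same2 h, H.refine2 h'⟩)
  · exact Or.inr (Or.inr ⟨H.refine2 h, H.eq_of_same2 h'⟩)

theorem unglue_eq : unglue a b c q = swap b c * (swap b q * swap a c) := by
  have h1 := H.hbc
  have h2 := H.hbq
  have h3 := H.hba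
  have h4 := H.hac
  have h5 := H.hqa
  have h6 := H.hqc
  ext x
  simp only [unglue, Perm.mul_apply]
  by_cases e1 : x = a
  · subst e1
    rw [swap_apply_of_ne_of_ne h4 h5.symm, swap_apply_left, swap_apply_of_ne_of_ne h3 h2,
      swap_apply_left, swap_apply_of_ne_of_ne h1.symm h6.symm, swap_apply_right]
  by_cases e2 : x = b
  · subst e2
    rw [swap_apply_of_ne_of_ne h1 h2, swap_apply_right, swap_apply_left,
      swap_apply_of_ne_of_ne h3 h1, swap_apply_left, swap_apply_of_ne_of_ne h2.symm h6]
  by_cases e3 : x = c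
  · subst e3
    rw [swap_apply_left, swap_apply_of_ne_of_ne h5 h2.symm, swap_apply_right, swap_apply_right,
      swap_apply_of_ne_of_ne h3.symm h5.symm, swap_apply_of_ne_of_ne h3.symm h4]
  by_cases e4 : x = q
  · subst e4
    rw [swap_apply_right, swap_apply_of_ne_of_ne h4.symm h1.symm,
      swap_apply_of_ne_of_ne h4.symm h6.symm, swap_apply_of_ne_of_ne h5 h6, swap_apply_right,
      swap_apply_left]
  rw [swap_apply_of_ne_of_ne e3 e4, swap_apply_of_ne_of_ne e1 e2, swap_apply_of_ne_of_ne e1 e4,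
    swap_apply_of_ne_of_ne e1 e3, swap_apply_of_ne_of_ne e2 e4, swap_apply_of_ne_of_ne e2 e3]

theorem unglue_face : unglue a b c q * σ * α =
    swap b c * (swap b q * (swap a c * (σ * α))) := by
  rw [H.unglue_eq]
  simp [mul_assoc]

theorem same1f : (swap a c * (σ * α)).SameCycle b q :=
  SameCycle.swap_mul_of_avoid (fun h => H.not_fab h.symm)
    (fun h => H.not_fab (h.trans H.hca).symm) H.fbq

theorem refine2f {x y : D} (h : (swap b q * (swap a c * (σ * α))).SameCycle x y) :
    (σ * α).SameCycle x y :=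
  SameCycle.of_swap_mul_of_sameCycle H.hca.symm (SameCycle.of_swap_mul_of_sameCycle H.same1f h)

theorem not2f : ¬ (swap b q * (swap a c * (σ * α))).SameCycle b c := fun h =>
  H.not_fab ((H.refine2f h).trans H.hca).symm

theorem nc_unglue_face : nc (unglue a b c q * σ * α) = nc (σ * α) + 1 := by
  have h1 := nc_swap_mul_of_sameCycle H.hac H.hca.symm
  have h2 := nc_swap_mul_of_sameCycle H.hbq H.same1f
  have h3 := nc_swap_mul_of_not H.not2f
  rw [H.unglue_face]
  omega

theorem face_bc : (unglue a b c q * σ * α).SameCycle b c := by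
  rw [H.unglue_face]
  exact sameCycle_swap_mul_of_not H.not2f

theorem index_of_same2f {x : D} (h : (swap b q * (swap a c * (σ * α))).SameCycle b x) :
    ∃ l < k, ((σ * α) ^ l) b = x := by
  refine (SameCycle.iff_of_forall (fun x => ∃ l < k, ((σ * α) ^ l) b = x) ?_ h).1 ⟨0, H.k_pos, rfl⟩
  rintro _ ⟨l, hl, rfl⟩
  have hs := SameCycle.pow_right (σ * α) b (l + 1)
  have hk := H.k_lt
  rw [Perm.mul_apply, Perm.mul_apply, ← Perm.mul_apply (σ * α), ← pow_succ',
    swap_apply_of_ne_of_ne (H.ne_of_face hs (SameCycle.refl _ _)) (H.ne_of_face hs H.hca)]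
  by_cases e : l + 1 = k
  · rw [e, H.hq, swap_apply_right]
    exact ⟨0, H.k_pos, rfl⟩
  · rw [swap_apply_of_ne_of_ne]
    · exact ⟨l + 1, by omega, rfl⟩
    · intro h
      have := pow_inj_of_lt_per (l := 0) (by omega) (by omega) h
      omega
    · intro h
      rw [← H.hq] at h
      exact e (pow_inj_of_lt_per (by omega) hk h)

theorem face {x y : D} (h : (unglue a b c q * σ * α).SameCycle x y) :
    (σ * α).SameCycle x y ∨ ((∃ l < k, ((σ * α) ^ l) b = x) ∧ (σ * α).SameCycle y a) ∨
      ((σ * α).SameCycle x a ∧ ∃ l < k, ((σ * α) ^ l) b = y) := by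
  rw [H.unglue_face] at h
  rcases SameCycle.join_of_swap_mul h with h | ⟨h, h'⟩ | ⟨h, h'⟩
  · exact Or.inl (H.refine2f h)
  · exact Or.inr (Or.inl ⟨H.index_of_same2f h.symm, (H.refine2f h').trans H.hca⟩)
  · exact Or.inr (Or.inr ⟨(H.refine2f h).trans H.hca, H.index_of_same2f h'.symm⟩)

theorem closed {p : D → Prop} (h1 : ∀ d, p d → p ((unglue a b c q * σ) d))
    (h2 : ∀ d, p d → p (α d)) (hab : p a ↔ p b) : ∀ d, p d → p (σ d) := by
  have hbc : p b ↔ p c := SameCycle.iff_of_forall p (fun d hd => h1 (α d) (h2 d hd)) H.face_bc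
  have haq : p a ↔ p q := by
    have := SameCycle.apply_right (unglue a b c q * σ) a
    rw [H.unglue_root] at this
    exact SameCycle.iff_of_forall p h1 this
  intro d hd
  have hd' := h1 d hd
  have e : σ d = glue a b c q ((unglue a b c q * σ) d) := by
    rw [← Perm.mul_apply, ← mul_assoc, glue_unglue, one_mul]
  rw [e]
  generalize (unglue a b c q * σ) d = z at hd'
  simp only [glue, Perm.mul_apply, swap_apply_def]
  split_ifs <;> simp_all

theorem root_notMem : ¬ orbS (unglue a b c q * σ) α b a := by
  intro h
  have hc : Conn (unglue a b c q * σ) α := fun p h1 h2 =>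
    H.map.conn p (H.closed h1 h2 (orbS_iff_of_closed h1 h2 h).symm) h2
  have h0 := hc.genus H.map.inv
  have := H.map.euler
  have := H.nc_unglue
  have := H.nc_unglue_face
  omega

theorem cover (x : D) : orbS (unglue a b c q * σ) α b x ∨ orbS (unglue a b c q * σ) α a x := by
  have r := orbS_left (unglue a b c q * σ) α
  have r' := orbS_right (unglue a b c q * σ) α
  have h2 : ∀ d, (orbS (unglue a b c q * σ) α b d ∨ orbS (unglue a b c q * σ) α a d) →
      (orbS (unglue a b c q * σ) α b (α d) ∨ orbS (unglue a b c q * σ) α a (α d)) :=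
    fun d => Or.imp (fun h => Setoid.trans' _ h (r' d)) (fun h => Setoid.trans' _ h (r' d))
  refine H.map.conn (fun z => orbS (unglue a b c q * σ) α b z ∨ orbS (unglue a b c q * σ) α a z)
    (H.closed ?_ h2 ?_) h2 b x (Or.inl (Setoid.refl' _ _))
  · exact fun d => Or.imp (fun h => Setoid.trans' _ h (r d)) (fun h => Setoid.trans' _ h (r d))
  · exact iff_of_true (Or.inr (Setoid.refl' _ _)) (Or.inl (Setoid.refl' _ _))

theorem nsep_face {x y : D} (hS : ¬ (x = b ∧ y = a)) (hv : σ.SameCycle x y)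
    (hx : ∃ l < k, ((σ * α) ^ l) b = x) (hy : (σ * α).SameCycle y a) : False := by
  obtain ⟨l, hl, rfl⟩ := hx
  rcases Nat.eq_zero_or_pos l with rfl | hl0
  · exact hS ⟨rfl, H.map.ns _ _ (hv.symm.trans H.vab.symm) hy⟩
  · exact H.min l y hl0 hl hv.symm hy

theorem nsep_vertex {y : D} (hy : σ.SameCycle y q) (hyc : y ≠ c)
    (hf : (unglue a b c q * σ * α).SameCycle a y) : False := by
  rcases H.face hf with h | ⟨⟨l, -, h⟩, -⟩ | ⟨-, l, hl, rfl⟩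
  · exact hyc (H.map.ns _ _ (hy.trans H.hcq.symm) (h.symm.trans H.hca.symm))
  · exact H.not_fab (h ▸ (SameCycle.pow_right (σ * α) b l)).symm
  · have := H.map.ns _ _ hy ((SameCycle.pow_right (σ * α) b l).symm.trans H.fbq)
    rw [← H.hq] at this
    have := pow_inj_of_lt_per (hl.trans H.k_lt) H.k_lt this
    omega

theorem cut : Cut (unglue a b c q * σ) α (orbS (unglue a b c q * σ) α b) a b c where
  inv := H.map.inv
  fpf := H.map.fpf
  Sσ x h := Setoid.trans' _ h (orbS_left _ _ x)
  Sα x h := Setoid.trans' _ h (orbS_right _ _ x)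
  hb := Setoid.refl' _ _
  ha := H.root_notMem
  hq := by rw [H.unglue_root]; exact H.hqa
  hcb := H.hbc.symm
  hbc := H.face_bc
  ns := by
    have sf : ∀ {x y}, (unglue a b c q * σ * α).SameCycle x y →
        orbS (unglue a b c q * σ) α x y := fun h =>
      SameCycle.of_forall (orbS (unglue a b c q * σ) α)
        (fun z => Setoid.trans' _ (orbS_right _ _ z) (orbS_left _ _ (α z))) h
    have hc := sf H.face_bc
    intro x y hv hf
    have hxy := sf hf
    have nba : ∀ {x y}, orbS (unglue a b c q * σ) α x y → ¬ (x = b ∧ y = a) := by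
      rintro _ _ h ⟨rfl, rfl⟩; exact H.root_notMem h
    rcases H.vertex hv with h | ⟨rfl, h⟩ | ⟨h, rfl⟩
    · rcases H.face hf with h' | ⟨h1, h2⟩ | ⟨h1, h2⟩
      · exact H.map.ns _ _ h h'
      · exact (H.nsep_face (nba hxy) h h1 h2).elim
      · exact (H.nsep_face (nba (Setoid.symm' _ hxy)) h.symm h2 h1).elim
    · refine (H.nsep_vertex h ?_ hf).elim
      rintro rfl
      exact H.root_notMem (Setoid.trans' _ hc (Setoid.symm' _ hxy))
    · refine (H.nsep_vertex h ?_ hf.symm).elim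
      rintro rfl
      exact H.root_notMem (Setoid.trans' _ hc hxy)
  conn := by
    intro p h1 h2 x y hxy hx
    by_cases hS : orbS (unglue a b c q * σ) α b x
    · exact (orbS_iff_of_closed h1 h2 (Setoid.trans' _ (Setoid.symm' _ hS) (hxy.1 hS))).1 hx
    · have e1 := (H.cover x).resolve_left hS
      have e2 := (H.cover y).resolve_left (fun h => hS (hxy.2 h))
      exact (orbS_iff_of_closed h1 h2 (Setoid.trans' _ (Setoid.symm' _ e1) e2)).1 hx
  euler := by
    have := H.map.euler
    have := H.nc_unglue
    have := H.nc_unglue_face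
    omega

theorem glue_cut : glue a b c ((unglue a b c q * σ) a) * (unglue a b c q * σ) = σ := by
  rw [H.unglue_root, ← mul_assoc, glue_unglue, one_mul]

end FirstHit

theorem PMap.exists_firstHit {σ α : Perm D} (M : PMap σ α) {a : D} (h1 : σ a ≠ a)
    (h2 : σ a ≠ α a) : ∃ c q k, FirstHit σ α a (σ a) c q k := by
  classical
  have hα : (σ * α) (α a) = σ a := by rw [Perm.mul_apply, M.inv]
  have hm : (σ * α).SameCycle (σ a) (α a) := by
    have := SameCycle.apply_right (σ * α) (α a)
    rw [hα] at this
    exact this.symm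
  obtain ⟨m, hm, hm'⟩ := SameCycle.exists_lt_per hm
  have hm0 : 0 < m := by
    rcases Nat.eq_zero_or_pos m with rfl | h
    exacts [absurd hm' h2, h]
  have hex : ∃ k, 0 < k ∧ ∃ x, σ.SameCycle x (((σ * α) ^ k) (σ a)) ∧ (σ * α).SameCycle x a := by
    refine ⟨m, hm0, (σ * α) a, ?_, (SameCycle.apply_right _ _).symm⟩
    rw [hm', Perm.mul_apply]
    exact (SameCycle.apply_right _ _).symm
  obtain ⟨hk, x, hx, hx'⟩ := Nat.find_spec hex
  have hle : Nat.find hex ≤ m := Nat.find_min' hex (by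
    refine ⟨hm0, (σ * α) a, ?_, (SameCycle.apply_right _ _).symm⟩
    rw [hm', Perm.mul_apply]
    exact (SameCycle.apply_right _ _).symm)
  exact ⟨x, _, Nat.find hex, M, rfl, h1, hk, hle.trans_lt hm, rfl, hx, hx',
    fun l y hl hlt hy hy' => Nat.find_min hex hlt ⟨hl, y, hy, hy'⟩⟩

theorem PMap.exists_cut {σ α : Perm D} (M : PMap σ α) {a : D} (h1 : σ a ≠ a)
    (h2 : σ a ≠ α a) : ∃ (σ₀ : Perm D) (S : D → Prop) (c : D), Cut σ₀ α S a (σ a) c ∧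
      glue a (σ a) c (σ₀ a) * σ₀ = σ := by
  obtain ⟨c, q, k, H⟩ := M.exists_firstHit h1 h2
  exact ⟨_, _, c, H.cut, H.glue_cut⟩

end split

section sums
variable {D D' : Type}

theorem nc_congr [Finite D] [Finite D'] {f : Perm D} {f' : Perm D'} (e : D ≃ D')
    (h : ∀ x, e (f x) = f' (e x)) : nc f = nc f' := by
  refine Nat.card_congr (Quotient.congr e fun x y => ⟨fun k => SameCycle.map_equiv e h k, fun k => ?_⟩)
  have := SameCycle.map_equiv e.symm (intertwine_symm e h) k
  rwa [symm_apply_apply, symm_apply_apply] at this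

theorem sum_quotient_eq [Finite D] [Finite D'] {f : Perm D} {g : Perm D'} {x y : D ⊕ D'}
    (h : (Perm.sumCongr f g).SameCycle x y) :
    Sum.map (Quotient.mk (SameCycle.setoid f)) (Quotient.mk (SameCycle.setoid g)) x =
      Sum.map (Quotient.mk (SameCycle.setoid f)) (Quotient.mk (SameCycle.setoid g)) y := by
  refine SameCycle.map_eq (Sum.map (Quotient.mk (SameCycle.setoid f))
    (Quotient.mk (SameCycle.setoid g))) ?_ h
  rintro (x | x)
  · exact congrArg Sum.inl (Quotient.sound (SameCycle.apply_right f x).symm)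
  · exact congrArg Sum.inr (Quotient.sound (SameCycle.apply_right g x).symm)

theorem nc_sumCongr [Finite D] [Finite D'] (f : Perm D) (g : Perm D') :
    nc (Perm.sumCongr f g) = nc f + nc g := by
  rw [nc, nc, nc, ← Nat.card_sum]
  refine Nat.card_congr
    { toFun := Quotient.lift _ fun x y h => sum_quotient_eq h
      invFun := Sum.elim
        (Quotient.lift (fun x => Quotient.mk (SameCycle.setoid (Perm.sumCongr f g)) (Sum.inl x))
          fun x y h => SameCycle.map_eq
            (fun x => Quotient.mk (SameCycle.setoid (Perm.sumCongr f g)) (Sum.inl x))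
            (fun z => Quotient.sound (SameCycle.apply_right (Perm.sumCongr f g) (Sum.inl z)).symm) h)
        (Quotient.lift (fun x => Quotient.mk (SameCycle.setoid (Perm.sumCongr f g)) (Sum.inr x))
          fun x y h => SameCycle.map_eq
            (fun x => Quotient.mk (SameCycle.setoid (Perm.sumCongr f g)) (Sum.inr x))
            (fun z => Quotient.sound (SameCycle.apply_right (Perm.sumCongr f g) (Sum.inr z)).symm) h)
      left_inv := ?_
      right_inv := ?_ }
  · rintro ⟨x | x⟩ <;> rfl
  · rintro (x | x) <;> induction x using Quotient.ind <;> rfl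

theorem SameCycle.of_inl [Finite D] [Finite D'] {f : Perm D} {g : Perm D'} {x y : D}
    (h : (Perm.sumCongr f g).SameCycle (Sum.inl x) (Sum.inl y)) : f.SameCycle x y :=
  Quotient.exact (Sum.inl_injective (sum_quotient_eq h))

theorem SameCycle.of_inr [Finite D] [Finite D'] {f : Perm D} {g : Perm D'} {x y : D'}
    (h : (Perm.sumCongr f g).SameCycle (Sum.inr x) (Sum.inr y)) : g.SameCycle x y :=
  Quotient.exact (Sum.inr_injective (sum_quotient_eq h))

theorem sumCongr_pow_inl (f : Perm D) (g : Perm D') (x : D) (k : ℕ) :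
    (Perm.sumCongr f g ^ k) (Sum.inl x) = Sum.inl ((f ^ k) x) := by
  induction k with
  | zero => rfl
  | succ k ih => rw [pow_succ', pow_succ', Perm.mul_apply, Perm.mul_apply, ih]; rfl

theorem sumCongr_pow_inr (f : Perm D) (g : Perm D') (x : D') (k : ℕ) :
    (Perm.sumCongr f g ^ k) (Sum.inr x) = Sum.inr ((g ^ k) x) := by
  induction k with
  | zero => rfl
  | succ k ih => rw [pow_succ', pow_succ', Perm.mul_apply, Perm.mul_apply, ih]; rfl

theorem per_inl (f : Perm D) (g : Perm D') (x : D) :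
    per (Perm.sumCongr f g) (Sum.inl x) = per f x := by
  refine Function.minimalPeriod_eq_minimalPeriod_iff.2 fun n => ?_
  rw [Function.IsPeriodicPt, Function.IsPeriodicPt, Function.IsFixedPt, Function.IsFixedPt,
    iterate_eq_pow, iterate_eq_pow, sumCongr_pow_inl]
  exact Sum.inl_injective.eq_iff

theorem per_inr (f : Perm D) (g : Perm D') (x : D') :
    per (Perm.sumCongr f g) (Sum.inr x) = per g x := by
  refine Function.minimalPeriod_eq_minimalPeriod_iff.2 fun n => ?_
  rw [Function.IsPeriodicPt, Function.IsPeriodicPt, Function.IsFixedPt, Function.IsFixedPt,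
    iterate_eq_pow, iterate_eq_pow, sumCongr_pow_inr]
  exact Sum.inr_injective.eq_iff

theorem exists_sumCongr_eq {A A' B B' : Type} (e : A ⊕ B ≃ A' ⊕ B')
    (h : ∀ x, x.isLeft = true ↔ (e x).isLeft = true) :
    ∃ (f : A ≃ A') (g : B ≃ B'), (∀ x, e (Sum.inl x) = Sum.inl (f x)) ∧
      ∀ x, e (Sum.inr x) = Sum.inr (g x) := by
  have h' : ∀ x, x.isLeft = true ↔ (e.symm x).isLeft = true := fun x => by
    rw [h (e.symm x), apply_symm_apply]
  have h1 : ∀ x : A, ∃ y, e (Sum.inl x) = Sum.inl y := fun x =>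
    Sum.isLeft_iff.1 ((h (Sum.inl x)).1 rfl)
  have h2 : ∀ x : A', ∃ y, e.symm (Sum.inl x) = Sum.inl y := fun x =>
    Sum.isLeft_iff.1 ((h' (Sum.inl x)).1 rfl)
  have h3 : ∀ x : B, ∃ y, e (Sum.inr x) = Sum.inr y := fun x => by
    have := h (Sum.inr x)
    rcases hx : e (Sum.inr x) with y | y
    · simp [hx] at this
    · exact ⟨y, rfl⟩
  have h4 : ∀ x : B', ∃ y, e.symm (Sum.inr x) = Sum.inr y := fun x => by
    have := h' (Sum.inr x)
    rcases hx : e.symm (Sum.inr x) with y | y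
    · simp [hx] at this
    · exact ⟨y, rfl⟩
  choose f hf using h1
  choose f' hf' using h2
  choose g hg using h3
  choose g' hg' using h4
  refine ⟨⟨f, f', fun x => ?_, fun x => ?_⟩, ⟨g, g', fun x => ?_, fun x => ?_⟩, hf, hg⟩
  · exact Sum.inl_injective (by rw [← hf', ← hf, symm_apply_apply])
  · exact Sum.inl_injective (by rw [← hf, ← hf', apply_symm_apply])
  · exact Sum.inr_injective (by rw [← hg', ← hg, symm_apply_apply])
  · exact Sum.inr_injective (by rw [← hg, ← hg', apply_symm_apply])

/-- The union of two nonseparable planar maps, ready to be glued. -/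
theorem cut_sum [Fintype D] [DecidableEq D] [Fintype D'] [DecidableEq D'] {σ α : Perm D}
    {σ' α' : Perm D'} (M : PMap σ α) (M' : PMap σ' α') {a : D'} {b c : D}
    (ha : σ' a ≠ a) (hcb : c ≠ b) (hbc : (σ * α).SameCycle b c) :
    Cut (Perm.sumCongr σ σ') (Perm.sumCongr α α') (fun x => x.isLeft = true) (Sum.inr a) (Sum.inl b)
      (Sum.inl c) where
  inv := by
    rintro (x | x)
    · exact congrArg Sum.inl (M.inv x)
    · exact congrArg Sum.inr (M'.inv x)
  fpf := by
    rintro (x | x) h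
    · exact M.fpf x (Sum.inl_injective h)
    · exact M'.fpf x (Sum.inr_injective h)
  Sσ := by rintro (x | x) h; exacts [h, h]
  Sα := by rintro (x | x) h; exacts [h, h]
  hb := rfl
  ha := by simp
  hq h := ha (Sum.inr_injective h)
  hcb h := hcb (Sum.inl_injective h)
  hbc := by
    rw [sumCongr_mul]
    obtain ⟨k, rfl⟩ := hbc.exists_nat_pow_eq
    rw [← sumCongr_pow_inl _ (σ' * α')]
    exact SameCycle.pow_right _ _ _
  ns := by
    rw [NSep, sumCongr_mul]
    rintro (x | x) (y | y) h1 h2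
    · exact congrArg Sum.inl (M.ns _ _ (SameCycle.of_inl h1) (SameCycle.of_inl h2))
    · exact absurd (sum_quotient_eq h1) Sum.inl_ne_inr
    · exact absurd (sum_quotient_eq h1) Sum.inr_ne_inl
    · exact congrArg Sum.inr (M'.ns _ _ (SameCycle.of_inr h1) (SameCycle.of_inr h2))
  conn := by
    rintro p h1 h2 (x | x) (y | y) h
    · exact M.conn (fun z => p (Sum.inl z)) (fun d hd => h1 _ hd) (fun d hd => h2 _ hd) x y
    · simp at h
    · simp at h
    · exact M'.conn (fun z => p (Sum.inr z)) (fun d hd => h1 _ hd) (fun d hd => h2 _ hd) x y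
  euler := by
    have := M.euler
    have := M'.euler
    rw [sumCongr_mul, nc_sumCongr, nc_sumCongr, Nat.card_sum]
    omega

theorem conn_subtypePerm {σ α : Perm D} {T : D → Prop} (hσ : ∀ x, T (σ x) ↔ T x)
    (hα : ∀ x, T (α x) ↔ T x)
    (h : ∀ p : D → Prop, (∀ d, p d → p (σ d)) → (∀ d, p d → p (α d)) →
      ∀ x y, T x → T y → p x → p y) :
    Conn (σ.subtypePerm hσ) (α.subtypePerm hα) := by
  intro p h1 h2 x y hx
  obtain ⟨_, hy⟩ := h (fun z => ∃ hz : T z, p ⟨z, hz⟩)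
    (fun d hd => ⟨(hσ d).2 hd.1, h1 _ hd.2⟩)
    (fun d hd => ⟨(hα d).2 hd.1, h2 _ hd.2⟩) x y x.2 y.2 ⟨x.2, hx⟩
  exact hy

theorem NSep.subtypePerm {σ α : Perm D} {T : D → Prop} (hσ : ∀ x, T (σ x) ↔ T x)
    (hα : ∀ x, T (α x) ↔ T x) (h : NSep σ α) :
    NSep (σ.subtypePerm hσ) (α.subtypePerm hα) := by
  intro x y h1 h2
  rw [subtypePerm_mul] at h2
  exact Subtype.ext (h _ _ (sameCycle_subtypePerm.1 h1) (sameCycle_subtypePerm.1 h2))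

theorem nc_eq_subtypePerm [Finite D] (f : Perm D) (T : D → Prop) [DecidablePred T]
    (h : ∀ x, T (f x) ↔ T x) (h' : ∀ x, ¬ T (f x) ↔ ¬ T x) :
    nc f = nc (f.subtypePerm h) + nc (f.subtypePerm (p := fun x => ¬ T x) h') := by
  rw [← nc_sumCongr]
  refine (nc_congr (Equiv.sumCompl T) ?_).symm
  rintro (x | x) <;> simp

/-- The two pieces of a cut are nonseparable planar maps. -/
theorem Cut.pieces [Fintype D] [DecidableEq D] {σ α : Perm D} {S : D → Prop} [DecidablePred S]
    {a b c : D} (H : Cut σ α S a b c) :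
    PMap (σ.subtypePerm H.Sσ_iff) (α.subtypePerm H.Sα_iff) ∧
      PMap (σ.subtypePerm (p := fun x => ¬ S x) fun x => not_congr (H.Sσ_iff x))
        (α.subtypePerm (p := fun x => ¬ S x) fun x => not_congr (H.Sα_iff x)) := by
  have c1 := conn_subtypePerm H.Sσ_iff H.Sα_iff
    fun p h1 h2 x y hx hy => H.conn p h1 h2 x y (iff_of_true hx hy)
  have c2 := conn_subtypePerm (T := fun x => ¬ S x) (fun x => not_congr (H.Sσ_iff x)) (fun x => not_congr (H.Sα_iff x))
    fun p h1 h2 x y hx hy => H.conn p h1 h2 x y (iff_of_false hx hy)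
  have i1 : ∀ x, α.subtypePerm H.Sα_iff (α.subtypePerm H.Sα_iff x) = x :=
    fun x => Subtype.ext (H.inv x)
  have i2 : ∀ x, α.subtypePerm (p := fun x => ¬ S x) (fun x => not_congr (H.Sα_iff x))
      (α.subtypePerm (p := fun x => ¬ S x) (fun x => not_congr (H.Sα_iff x)) x) = x :=
    fun x => Subtype.ext (H.inv x)
  have g1 := c1.genus i1
  have g2 := c2.genus i2
  have e := H.euler
  have n1 := nc_eq_subtypePerm σ S H.Sσ_iff (fun x => not_congr (H.Sσ_iff x))
  have n2 := nc_eq_subtypePerm (σ * α) S (fun x => (H.Sσ_iff _).trans (H.Sα_iff x))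
    (fun x => not_congr ((H.Sσ_iff _).trans (H.Sα_iff x)))
  have n3 := Nat.card_congr (Equiv.sumCompl S)
  rw [Nat.card_sum] at n3
  simp only [subtypePerm_mul] at g1 g2
  refine ⟨⟨i1, fun x h => H.fpf x (congrArg Subtype.val h), c1, ?_,
    H.ns.subtypePerm H.Sσ_iff H.Sα_iff⟩, ⟨i2, fun x h => H.fpf x (congrArg Subtype.val h), c2, ?_,
    H.ns.subtypePerm _ _⟩⟩ <;> simp only [subtypePerm_mul] <;> omega

end sums

/-- Rooted rotation systems on arbitrary finite sets of darts. -/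
structure RM where
  D : Type
  [fin : Fintype D]
  [dec : DecidableEq D]
  σ : Perm D
  α : Perm D
  root : D

attribute [instance] RM.fin RM.dec

namespace RM

/-- The degree of the root face. -/
noncomputable def deg (M : RM) : ℕ := per (M.σ * M.α) M.root

/-- Root-preserving isomorphism. -/
def Iso (M M' : RM) : Prop :=
  ∃ e : M.D ≃ M'.D, (∀ d, e (M.σ d) = M'.σ (e d)) ∧ (∀ d, e (M.α d) = M'.α (e d)) ∧
    e M.root = M'.root

theorem Iso.symm {M M' : RM} : Iso M M' → Iso M' M := fun ⟨e, h1, h2, h3⟩ =>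
  ⟨e.symm, intertwine_symm e h1, intertwine_symm e h2, by rw [symm_apply_eq, h3]⟩

theorem Iso.trans {M M' M'' : RM} : Iso M M' → Iso M' M'' → Iso M M'' :=
  fun ⟨e, h1, h2, h3⟩ ⟨e', h1', h2', h3'⟩ => ⟨e.trans e',
    fun d => by simp [h1, h1'], fun d => by simp [h2, h2'], by simp [h3, h3']⟩

theorem iso_face {M M' : RM} {e : M.D ≃ M'.D} (h1 : ∀ d, e (M.σ d) = M'.σ (e d))
    (h2 : ∀ d, e (M.α d) = M'.α (e d)) (x : M.D) :
    e ((M.σ * M.α) x) = (M'.σ * M'.α) (e x) := by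
  rw [Perm.mul_apply, Perm.mul_apply, h1, h2]

theorem Iso.deg_eq {M M' : RM} : Iso M M' → M.deg = M'.deg := fun ⟨e, h1, h2, h3⟩ => by
  rw [deg, deg, ← h3]
  exact per_congr e (iso_face h1 h2) _

theorem Iso.card_eq {M M' : RM} : Iso M M' → Nat.card M.D = Nat.card M'.D :=
  fun ⟨e, _⟩ => Nat.card_congr e

/-- Insertion of a map `B` in the root edge of `M`. -/
def ins (B : RM) (j : ℕ) (M : RM) : RM where
  D := B.D ⊕ M.D
  σ := glue (Sum.inr M.root) (Sum.inl B.root) (Sum.inl (((B.σ * B.α) ^ j) B.root))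
    (Perm.sumCongr B.σ M.σ (Sum.inr M.root)) * Perm.sumCongr B.σ M.σ
  α := Perm.sumCongr B.α M.α
  root := Sum.inr M.root

theorem iso_ins_iff {B B' M M' : RM} {j j' : ℕ} : Iso (ins B j M) (ins B' j' M') ↔
    ∃ e : B.D ⊕ M.D ≃ B'.D ⊕ M'.D,
      (∀ d, e ((glue (Sum.inr M.root) (Sum.inl B.root) (Sum.inl (((B.σ * B.α) ^ j) B.root))
        (Perm.sumCongr B.σ M.σ (Sum.inr M.root)) * Perm.sumCongr B.σ M.σ) d) =
          (glue (Sum.inr M'.root) (Sum.inl B'.root) (Sum.inl (((B'.σ * B'.α) ^ j') B'.root))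
        (Perm.sumCongr B'.σ M'.σ (Sum.inr M'.root)) * Perm.sumCongr B'.σ M'.σ) (e d)) ∧
      (∀ d, e (Perm.sumCongr B.α M.α d) = Perm.sumCongr B'.α M'.α (e d)) ∧
      e (Sum.inr M.root) = Sum.inr M'.root := Iff.rfl

theorem Iso.ins {B B' M M' : RM} (h : Iso B B') (h' : Iso M M') (j : ℕ) :
    Iso (ins B j M) (ins B' j M') := by
  obtain ⟨e, h1, h2, h3⟩ := h
  obtain ⟨e', h1', h2', h3'⟩ := h'
  refine iso_ins_iff.2 ⟨Equiv.sumCongr e e', fun d => ?_, ?_, congrArg Sum.inr h3'⟩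
  · rw [Perm.mul_apply, Perm.mul_apply, map_glue (Equiv.sumCongr e e')]
    rcases d with d | d <;>
      simp [h1, h1', h3, h3', pow_map_equiv e (iso_face h1 h2)]
  · rintro (d | d)
    · exact congrArg Sum.inl (h2 d)
    · exact congrArg Sum.inr (h2' d)

/-- Nonseparable planar maps. -/
def Good (M : RM) : Prop := PMap M.σ M.α

theorem ins_cut {B M : RM} {j : ℕ} (hB : B.Good) (hM : M.Good) (h : M.σ M.root ≠ M.root)
    (h0 : 0 < j) (hj : j < B.deg) :
    Cut (Perm.sumCongr B.σ M.σ) (Perm.sumCongr B.α M.α) (fun x => x.isLeft = true)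
      (Sum.inr M.root) (Sum.inl B.root) (Sum.inl (((B.σ * B.α) ^ j) B.root)) :=
  cut_sum hB hM h (fun h => by
    have := pow_inj_of_lt_per (l := 0) hj (by rw [deg] at hj; omega) h
    omega) (SameCycle.pow_right _ _ _)

theorem ins_index (B M : RM) (j : ℕ) :
    ((Perm.sumCongr B.σ M.σ * Perm.sumCongr B.α M.α) ^ j) (Sum.inl B.root) =
      Sum.inl (((B.σ * B.α) ^ j) B.root) := by
  rw [sumCongr_mul, sumCongr_pow_inl]

theorem ins_per (B M : RM) :
    per (Perm.sumCongr B.σ M.σ * Perm.sumCongr B.α M.α) (Sum.inl B.root) = B.deg := by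
  rw [sumCongr_mul, per_inl, deg]

theorem ins_good {B M : RM} {j : ℕ} (hB : B.Good) (hM : M.Good) (h : M.σ M.root ≠ M.root)
    (h0 : 0 < j) (hj : j < B.deg) : (ins B j M).Good :=
  (ins_cut hB hM h h0 hj).pmap (by rwa [ins_per]) (ins_index B M j)

theorem ins_deg {B M : RM} {j : ℕ} (hB : B.Good) (hM : M.Good) (h : M.σ M.root ≠ M.root)
    (h0 : 0 < j) (hj : j < B.deg) : (ins B j M).deg = M.deg + (B.deg - j) := by
  have := (ins_cut hB hM h h0 hj).per_glue (by rwa [ins_per]) (ins_index B M j)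
  rw [ins_per, sumCongr_mul, per_inr] at this
  exact this

theorem ins_apply_root {B M : RM} {j : ℕ} (hB : B.Good) (hM : M.Good) (h : M.σ M.root ≠ M.root)
    (h0 : 0 < j) (hj : j < B.deg) : (ins B j M).σ (ins B j M).root = Sum.inl B.root :=
  (ins_cut hB hM h h0 hj).apply_root

theorem ins_inj {B M B' M' : RM} {j j' : ℕ} (hB : B.Good) (hM : M.Good)
    (h : M.σ M.root ≠ M.root) (h0 : 0 < j) (hj : j < B.deg) (hB' : B'.Good) (hM' : M'.Good)
    (h' : M'.σ M'.root ≠ M'.root) (h0' : 0 < j') (hj' : j' < B'.deg)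
    (hI : Iso (ins B j M) (ins B' j' M')) : j = j' ∧ Iso B B' ∧ Iso M M' := by
  obtain ⟨e, h1, h2, h3⟩ := iso_ins_iff.1 hI
  obtain ⟨hjj, hb, hσ, hS⟩ := (ins_cut hB hM h h0 hj).unique (ins_cut hB' hM' h' h0' hj')
    (by rwa [ins_per]) (ins_index B M j) (by rwa [ins_per]) (ins_index B' M' j') e h1 h2 h3
  obtain ⟨f, g, hf, hg⟩ := exists_sumCongr_eq e hS
  refine ⟨hjj, ⟨f, fun d => ?_, fun d => ?_, ?_⟩, ⟨g, fun d => ?_, fun d => ?_, ?_⟩⟩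
  · have := hσ (Sum.inl d)
    rw [Perm.sumCongr_apply, Sum.map_inl, hf, hf] at this
    exact Sum.inl_injective this
  · have := h2 (Sum.inl d)
    rw [Perm.sumCongr_apply, Sum.map_inl, hf, hf] at this
    exact Sum.inl_injective this
  · rw [hf] at hb
    exact Sum.inl_injective hb
  · have := hσ (Sum.inr d)
    rw [Perm.sumCongr_apply, Sum.map_inr, hg, hg] at this
    exact Sum.inr_injective this
  · have := h2 (Sum.inr d)
    rw [Perm.sumCongr_apply, Sum.map_inr, hg, hg] at this
    exact Sum.inr_injective this
  · rw [hg] at h3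
    exact Sum.inr_injective h3

/-- Every nonseparable map which is neither a link nor a loop is obtained by insertion. -/
theorem Good.exists_ins {M : RM} (hM : M.Good) (h1 : M.σ M.root ≠ M.root)
    (h2 : M.σ M.root ≠ M.α M.root) : ∃ (B : RM) (j : ℕ) (N : RM), B.Good ∧ N.Good ∧
      N.σ N.root ≠ N.root ∧ 0 < j ∧ j < B.deg ∧ Iso (ins B j N) M ∧
      Nat.card B.D < Nat.card M.D ∧ Nat.card N.D < Nat.card M.D := by
  classical
  obtain ⟨σ₀, S, c, H, hg⟩ := hM.exists_cut h1 h2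
  obtain ⟨p1, p2⟩ := H.pieces
  let B : RM := ⟨{x // S x}, σ₀.subtypePerm H.Sσ_iff, M.α.subtypePerm H.Sα_iff, ⟨_, H.hb⟩⟩
  let N : RM := ⟨{x // ¬ S x}, σ₀.subtypePerm (p := fun x => ¬ S x) fun x => not_congr (H.Sσ_iff x),
    M.α.subtypePerm (p := fun x => ¬ S x) fun x => not_congr (H.Sα_iff x), ⟨_, H.ha⟩⟩
  have hbc : (B.σ * B.α).SameCycle B.root ⟨c, H.hc⟩ := by
    change (σ₀.subtypePerm H.Sσ_iff * M.α.subtypePerm H.Sα_iff).SameCycle _ _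
    rw [subtypePerm_mul]
    exact sameCycle_subtypePerm.2 H.hbc
  obtain ⟨j, hj, hjc⟩ := SameCycle.exists_lt_per hbc
  have hcard := Nat.card_congr (Equiv.sumCompl S)
  rw [Nat.card_sum] at hcard
  have : Nonempty {x // S x} := ⟨B.root⟩
  have : Nonempty {x // ¬ S x} := ⟨N.root⟩
  have n1 : 0 < Nat.card {x // S x} := Nat.card_pos
  have n2 : 0 < Nat.card {x // ¬ S x} := Nat.card_pos
  refine ⟨B, j, N, p1, p2, fun h => H.hq (congrArg Subtype.val h), Nat.pos_of_ne_zero ?_, hj,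
    ⟨Equiv.sumCompl S, ?_, ?_, rfl⟩, by change Nat.card {x // S x} < _; omega,
    by change Nat.card {x // ¬ S x} < _; omega⟩
  · rintro rfl
    exact H.hcb (congrArg Subtype.val hjc).symm
  · intro x
    change Equiv.sumCompl S (glue _ _ _ _ (Perm.sumCongr B.σ N.σ x)) = _
    rw [map_glue, hjc]
    have e1 : Equiv.sumCompl S (Perm.sumCongr B.σ N.σ x) = σ₀ (Equiv.sumCompl S x) := by
      rcases x with x | x <;> rfl
    rw [e1]
    conv_rhs => rw [← hg]
    rfl
  · rintro (x | x) <;> rfl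

end RM

theorem RM.Iso.good {M M' : RM} (h : RM.Iso M M') (hM : M.Good) : M'.Good := by
  obtain ⟨e, h1, h2, h3⟩ := h
  have s1 := intertwine_symm e h1
  have s2 := intertwine_symm e h2
  have hφ := RM.iso_face h1 h2
  refine ⟨fun x => ?_, fun x hx => ?_, fun p c1 c2 x y hx => ?_, ?_, fun x y k1 k2 => ?_⟩
  · apply e.symm.injective
    rw [s2, s2, hM.inv]
  · apply hM.fpf (e.symm x)
    rw [← s2, hx]
  · have := hM.conn (fun z => p (e z)) (fun d hd => by rw [h1]; exact c1 _ hd)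
      (fun d hd => by rw [h2]; exact c2 _ hd) (e.symm x) (e.symm y) (by simpa using hx)
    simpa using this
  · rw [← nc_congr e h1, ← nc_congr e hφ, ← Nat.card_congr e]
    exact hM.euler
  · exact e.symm.injective (hM.ns _ _ (SameCycle.map_equiv e.symm s1 k1)
      (SameCycle.map_equiv e.symm (intertwine_symm e hφ) k2))

/-- Construction trees of nonseparable planar maps. -/
inductive Code where
  | link : Code
  | loop : Code
  | ins (B : Code) (j : ℕ) (M : Code) : Code

namespace Code

/-- The number of edges. -/
def size : Code → ℕ
  | link => 1
  | loop => 1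
  | ins B _ M => B.size + M.size

/-- The degree of the root face. -/
def deg : Code → ℕ
  | link => 2
  | loop => 1
  | ins B j M => M.deg + (B.deg - j)

/-- Trees which describe a map. -/
def Valid : Code → Prop
  | link => True
  | loop => True
  | ins B j M => B.Valid ∧ M.Valid ∧ M ≠ link ∧ 0 < j ∧ j < B.deg

/-- The map described by a tree. -/
def toRM : Code → RM
  | link => ⟨Bool, 1, boolNot, true⟩
  | loop => ⟨Bool, boolNot, boolNot, true⟩
  | ins B j M => RM.ins B.toRM j M.toRM

theorem card_toRM (c : Code) : Nat.card c.toRM.D = 2 * c.size := by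
  induction c with
  | link => simp [toRM, size]
  | loop => simp [toRM, size]
  | ins B j M h1 h2 =>
    have : Nat.card (B.toRM.D ⊕ M.toRM.D) = Nat.card B.toRM.D + Nat.card M.toRM.D := Nat.card_sum
    rw [h1, h2] at this
    exact this.trans (by rw [size]; ring)

theorem sameCycle_boolNot (x y : Bool) : SameCycle boolNot x y := by
  have h := SameCycle.apply_right boolNot
  have h1 := h true
  have h2 := h false
  cases x <;> cases y
  exacts [SameCycle.refl _ _, h2, h1, SameCycle.refl _ _]

theorem nc_boolNot : nc boolNot = 1 := by
  rw [nc, Nat.card_eq_one_iff_unique]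
  refine ⟨⟨?_⟩, ⟨Quotient.mk _ true⟩⟩
  rintro ⟨x⟩ ⟨y⟩
  exact Quotient.sound (sameCycle_boolNot x y)

theorem nc_one_bool : nc (1 : Perm Bool) = 2 := by
  have : Nat.card (Quotient (SameCycle.setoid (1 : Perm Bool))) = Nat.card Bool := by
    refine (Nat.card_congr (Equiv.ofBijective (Quotient.mk _) ⟨fun x y h => ?_,
      Quotient.mk_surjective⟩)).symm
    exact sameCycle_one.1 (Quotient.exact h)
  rw [nc, this]
  simp

theorem conn_boolNot (σ : Perm Bool) : Conn σ boolNot := by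
  intro p h1 h2 x y hx
  have := h2 x hx
  cases x <;> cases y <;> first | exact hx | exact this

theorem boolNot_mul : (boolNot * boolNot : Perm Bool) = 1 := by
  ext x; cases x <;> rfl

theorem boolNot_ne (x : Bool) : boolNot x ≠ x := by
  cases x <;> decide

theorem boolNot_boolNot (x : Bool) : boolNot (boolNot x) = x := by
  cases x <;> rfl

theorem good_link : link.toRM.Good := by
  have h : PMap (1 : Perm Bool) boolNot := by
    refine ⟨boolNot_boolNot, boolNot_ne, conn_boolNot _, ?_, fun x y h _ => sameCycle_one.1 h⟩
    rw [one_mul, nc_boolNot, nc_one_bool]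
    simp
  exact h

theorem good_loop : loop.toRM.Good := by
  have h : PMap (boolNot : Perm Bool) boolNot := by
    refine ⟨boolNot_boolNot, boolNot_ne, conn_boolNot _, ?_, fun x y _ h => ?_⟩
    · rw [boolNot_mul, nc_boolNot, nc_one_bool]
      simp
    · rw [boolNot_mul] at h
      exact sameCycle_one.1 h
  exact h

theorem deg_link : link.toRM.deg = 2 := by
  have h1 : (1 * boolNot : Perm Bool) true = false := rfl
  have hle : per (1 * boolNot : Perm Bool) true ≤ 2 := per_le two_pos rfl
  have hp := per_pos (1 * boolNot : Perm Bool) true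
  have hne : per (1 * boolNot : Perm Bool) true ≠ 1 := by
    intro h
    have := pow_per (1 * boolNot : Perm Bool) true
    rw [h, pow_one, h1] at this
    exact absurd this (by decide)
  change per (1 * boolNot : Perm Bool) true = 2
  omega

theorem deg_loop : loop.toRM.deg = 1 :=
  le_antisymm (per_le (f := (boolNot * boolNot : Perm Bool)) (x := true) one_pos rfl)
    (per_pos (boolNot * boolNot : Perm Bool) true)

theorem Valid.good {c : Code} (h : c.Valid) :
    c.toRM.Good ∧ c.toRM.deg = c.deg ∧ (c.toRM.σ c.toRM.root = c.toRM.root ↔ c = link) := by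
  induction c with
  | link => exact ⟨good_link, deg_link, iff_of_true rfl rfl⟩
  | loop => exact ⟨good_loop, deg_loop, iff_of_false (by decide) (by simp)⟩
  | ins B j M h1 h2 =>
    obtain ⟨hB, hM, hne, h0, hj⟩ := h
    obtain ⟨B1, B2, -⟩ := h1 hB
    obtain ⟨M1, M2, M3⟩ := h2 hM
    rw [← B2] at hj
    refine ⟨RM.ins_good B1 M1 (mt M3.1 hne) h0 hj, ?_, iff_of_false ?_ (by simp)⟩
    · rw [deg, ← B2, ← M2]
      exact RM.ins_deg B1 M1 (mt M3.1 hne) h0 hj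
    · intro h
      exact Sum.inl_ne_inr ((RM.ins_apply_root B1 M1 (mt M3.1 hne) h0 hj).symm.trans h)

theorem Valid.root_ins {B M : Code} {j : ℕ} (h : (ins B j M).Valid) :
    (ins B j M).toRM.σ (ins B j M).toRM.root ≠ (ins B j M).toRM.α (ins B j M).toRM.root := by
  obtain ⟨hB, hM, hne, h0, hj⟩ := h
  obtain ⟨B1, B2, -⟩ := hB.good
  obtain ⟨M1, M2, M3⟩ := hM.good
  rw [← B2] at hj
  intro h
  exact Sum.inl_ne_inr ((RM.ins_apply_root B1 M1 (mt M3.1 hne) h0 hj).symm.trans h)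

theorem iso_root {M M' : RM} (h : RM.Iso M M') :
    (M.σ M.root = M.root ↔ M'.σ M'.root = M'.root) ∧
      (M.σ M.root = M.α M.root ↔ M'.σ M'.root = M'.α M'.root) := by
  obtain ⟨e, h1, h2, h3⟩ := h
  rw [← h3, ← h1, ← h2, e.injective.eq_iff, e.injective.eq_iff]
  exact ⟨Iff.rfl, Iff.rfl⟩

theorem eq_of_iso {c c' : Code} (h : c.Valid) (h' : c'.Valid) (hI : RM.Iso c.toRM c'.toRM) :
    c = c' := by
  induction c generalizing c' with
  | link =>
    exact (h'.good.2.2.1 ((iso_root hI).1.1 rfl)).symm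
  | loop =>
    have h1 := (iso_root hI).2.1 rfl
    cases c' with
    | link => exact absurd h1 (by decide)
    | loop => rfl
    | ins B j M => exact absurd h1 h'.root_ins
  | ins B j M ih1 ih2 =>
    cases c' with
    | link => exact absurd (h.good.2.2.1 ((iso_root hI).1.2 rfl)) (by simp)
    | loop => exact absurd ((iso_root hI).2.2 rfl) h.root_ins
    | ins B' j' M' =>
      obtain ⟨hB, hM, hne, h0, hj⟩ := h
      obtain ⟨hB', hM', hne', h0', hj'⟩ := h'
      obtain ⟨B1, B2, -⟩ := hB.good
      obtain ⟨M1, M2, M3⟩ := hM.good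
      obtain ⟨B1', B2', -⟩ := hB'.good
      obtain ⟨M1', M2', M3'⟩ := hM'.good
      rw [← B2] at hj
      rw [← B2'] at hj'
      obtain ⟨rfl, i1, i2⟩ := RM.ins_inj B1 M1 (mt M3.1 hne) h0 hj B1' M1' (mt M3'.1 hne') h0' hj' hI
      rw [ih1 hB hB' i1, ih2 hM hM' i2]

theorem iso_of_two {M : RM} (hM : M.Good) {σ : Perm Bool} (h1 : M.σ M.root ≠ M.α (M.σ M.root) →
      M.σ M.root = cond (σ true) M.root (M.α M.root) ∧
      M.σ (M.α M.root) = cond (σ false) M.root (M.α M.root)) :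
    RM.Iso ⟨Bool, σ, boolNot, true⟩ M := by
  obtain ⟨e1, e2⟩ := h1 (hM.fpf _).symm
  have hf : Function.Bijective (fun x : Bool => cond x M.root (M.α M.root)) := by
    refine ⟨?_, fun y => ?_⟩
    · have := hM.fpf M.root
      rintro (_ | _) (_ | _) h
      · rfl
      · exact absurd h this
      · exact absurd h.symm this
      · rfl
    · refine hM.conn (fun z => ∃ x : Bool, cond x M.root (M.α M.root) = z) ?_ ?_ M.root y
        ⟨true, rfl⟩
      · rintro _ ⟨_ | _, rfl⟩
        · exact ⟨_, e2.symm⟩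
        · exact ⟨_, e1.symm⟩
      · rintro _ ⟨_ | _, rfl⟩
        · exact ⟨true, (hM.inv _).symm⟩
        · exact ⟨false, rfl⟩
  refine ⟨Equiv.ofBijective _ hf, ?_, ?_, rfl⟩
  · rintro (_ | _)
    · exact e2.symm
    · exact e1.symm
  · rintro (_ | _)
    · exact (hM.inv _).symm
    · rfl

theorem exists_code (n : ℕ) : ∀ M : RM, M.Good → Nat.card M.D = n →
    ∃ c : Code, c.Valid ∧ RM.Iso c.toRM M := by
  induction n using Nat.strong_induction_on with
  | _ n ih =>
    intro M hM hn
    have hα : (M.σ * M.α) (M.α M.root) = M.σ M.root := by rw [Perm.mul_apply, hM.inv]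
    have f1 := SameCycle.apply_right (M.σ * M.α) (M.α M.root)
    rw [hα] at f1
    have f2 : (M.σ * M.α).SameCycle M.root (M.σ (M.α M.root)) :=
      SameCycle.apply_right (M.σ * M.α) M.root
    have v1 := SameCycle.apply_right M.σ M.root
    have v2 := SameCycle.apply_right M.σ (M.α M.root)
    by_cases h1 : M.σ M.root = M.root
    · rw [h1] at f1
      have := hM.ns _ _ v2 (f1.trans f2)
      exact ⟨link, trivial, iso_of_two hM fun _ => ⟨h1, this.symm⟩⟩
    by_cases h2 : M.σ M.root = M.α M.root
    · rw [h2] at v1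
      have := hM.ns _ _ (v1.trans v2) f2
      exact ⟨loop, trivial, iso_of_two hM fun _ => ⟨h2, this.symm⟩⟩
    obtain ⟨B, j, N, hB, hN, hNr, h0, hj, hI, c1, c2⟩ := hM.exists_ins h1 h2
    obtain ⟨b, vb, ib⟩ := ih _ (hn ▸ c1) B hB rfl
    obtain ⟨m, vm, im⟩ := ih _ (hn ▸ c2) N hN rfl
    refine ⟨ins b j m, ⟨vb, vm, ?_, h0, ?_⟩, (ib.ins im j).trans hI⟩
    · rintro rfl
      exact hNr ((iso_root im).1.1 rfl)
    · rw [← vb.good.2.1, ib.deg_eq]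
      exact hj

end Code

/-- The bundled map underlying a rooted map. -/
def RMap.toRM {k : ℕ} (M : RMap k) : RM := ⟨Fin (2 * k), M.σ, M.α, M.root⟩

theorem RM.Good.exists_rmap {k : ℕ} {M : RM} (hM : M.Good) (hk : Nat.card M.D = 2 * k) :
    ∃ N : {N : RMap k // ¬ N.Separable}, RM.Iso M N.1.toRM := by
  have e : M.D ≃ Fin (2 * k) := Finite.equivFinOfCardEq hk
  have hI : RM.Iso M ⟨Fin (2 * k), e.permCongr M.σ, e.permCongr M.α, e M.root⟩ :=
    ⟨e, fun d => by simp, fun d => by simp, rfl⟩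
  have hG := hI.good hM
  have he := hG.euler
  refine ⟨⟨⟨e.permCongr M.σ, e.permCongr M.α, e M.root, hG.inv, hG.fpf, hG.conn.closure, ?_⟩,
    fun hs => RMap.not_nsep_of_separable _ hs hG.ns⟩, hI⟩
  rw [numCycles_eq_nc, numCycles_eq_nc]
  dsimp only at he
  rw [Nat.card_fin] at he
  omega

theorem rmapIso_equivalence (k : ℕ) :
    Equivalence (fun M M' : {M : RMap k // ¬ M.Separable} => RMapIso M.1 M'.1) where
  refl _ := ⟨1, fun _ => rfl, fun _ => rfl, rfl⟩
  symm h := RM.Iso.symm (M := RMap.toRM _) (M' := RMap.toRM _) h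
  trans h h' := RM.Iso.trans (M := RMap.toRM _) (M' := RMap.toRM _) (M'' := RMap.toRM _) h h'

theorem bconnCount_eq_codes {k : ℕ} (hk : k ≠ 0) :
    bconnCount k = Nat.card {c : Code // c.Valid ∧ c.size = k} := by
  rw [bconnCount, if_neg hk]
  have h : ∀ c : {c : Code // c.Valid ∧ c.size = k},
      ∃ N : {N : RMap k // ¬ N.Separable}, RM.Iso c.1.toRM N.1.toRM := fun c =>
    c.2.1.good.1.exists_rmap (by rw [Code.card_toRM, c.2.2])
  choose F hF using h
  refine (Nat.card_eq_of_bijective (fun c => Quot.mk _ (F c)) ⟨fun c c' hcc => ?_, ?_⟩).symm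
  · have : RM.Iso (F c).1.toRM (F c').1.toRM :=
      ((rmapIso_equivalence k).quot_mk_eq_iff _ _).1 hcc
    exact Subtype.ext (Code.eq_of_iso c.2.1 c'.2.1
      (((hF c).trans this).trans (hF c').symm))
  · rintro ⟨N⟩
    have hN : N.1.toRM.Good := RMap.pmap_of_not_separable N.1 N.2
    obtain ⟨c, hc, hI⟩ := Code.exists_code _ N.1.toRM hN rfl
    have hsize : c.size = k := by
      have h1 := hI.card_eq
      have h2 : Nat.card N.1.toRM.D = 2 * k := Nat.card_fin _
      rw [Code.card_toRM, h2] at h1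
      omega
    have : RM.Iso (F ⟨c, hc, hsize⟩).1.toRM N.1.toRM := (hF _).symm.trans hI
    exact ⟨⟨c, hc, hsize⟩, Quot.sound this⟩

namespace Code

theorem size_pos (c : Code) : 0 < c.size := by
  induction c with
  | link => exact one_pos
  | loop => exact one_pos
  | ins B j M h1 h2 => rw [size]; omega

theorem Valid.deg_pos {c : Code} (h : c.Valid) : 0 < c.deg := by
  induction c with
  | link => exact two_pos
  | loop => exact one_pos
  | ins B j M h1 h2 => exact Nat.lt_of_lt_of_le (h2 h.2.1) (Nat.le_add_right _ _)

theorem finite_valid_le (n : ℕ) : {c : Code | c.Valid ∧ c.size ≤ n}.Finite := by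
  induction n with
  | zero => exact Set.Finite.subset Set.finite_empty fun c hc => (c.size_pos.not_ge hc.2).elim
  | succ n ih =>
    have h : (({link, loop} : Set Code) ∪ ⋃ B ∈ {c : Code | c.Valid ∧ c.size ≤ n},
        ⋃ j ∈ Set.Iio B.deg, Set.image (ins B j) {c : Code | c.Valid ∧ c.size ≤ n}).Finite :=
      (Set.toFinite _).union (ih.biUnion fun B _ => (Set.finite_Iio _).biUnion fun j _ =>
        ih.image _)
    refine h.subset ?_
    rintro (_ | _ | ⟨B, j, M⟩) ⟨hc, hs⟩
    · exact Or.inl (Or.inl rfl)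
    · exact Or.inl (Or.inr rfl)
    · rw [size] at hs
      have h1 := B.size_pos
      have h2 := M.size_pos
      refine Or.inr (Set.mem_biUnion ⟨hc.1, ?_⟩ (Set.mem_biUnion hc.2.2.2.2
        ⟨M, ⟨hc.2.1, ?_⟩, rfl⟩)) <;> omega

theorem valid_link : link.Valid := trivial

theorem valid_loop : loop.Valid := trivial

/-- The valid trees with `n` edges. -/
noncomputable def codes (n : ℕ) : Finset Code :=
  ((finite_valid_le n).subset (t := {c : Code | c.Valid ∧ c.size = n})
    fun _ h => ⟨h.1, h.2.le⟩).toFinset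

theorem mem_codes {n : ℕ} {c : Code} : c ∈ codes n ↔ c.Valid ∧ c.size = n := by
  simp [codes]

theorem card_codes (n : ℕ) : Nat.card {c : Code // c.Valid ∧ c.size = n} = (codes n).card := by
  rw [← Nat.card_eq_finsetCard]
  exact Nat.card_congr (Equiv.subtypeEquivRight fun c => mem_codes.symm)

open Polynomial

/-- The degree enumerator of the trees with `n` edges. -/
noncomputable def enum (n : ℕ) : ℚ[X] := ∑ c ∈ codes n, X ^ c.deg

open Classical in
/-- The degree enumerator of the trees with `n` edges other than the link. -/
noncomputable def enumNL (n : ℕ) : ℚ[X] := ∑ c ∈ (codes n).filter (· ≠ link), X ^ c.deg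

/-- The enumerator of the ways to insert a map with `n` edges. -/
noncomputable def enumIns (n : ℕ) : ℚ[X] :=
  ∑ B ∈ codes n, ∑ j ∈ Finset.Ico 1 B.deg, X ^ (B.deg - j)

theorem geom (d : ℕ) : (X - 1) * ∑ j ∈ Finset.Ico 1 (d + 1), (X : ℚ[X]) ^ (d + 1 - j) =
    X ^ (d + 1) - X := by
  induction d with
  | zero => simp
  | succ d ih =>
    have h : ∑ j ∈ Finset.Ico 1 (d + 1 + 1), (X : ℚ[X]) ^ (d + 1 + 1 - j) =
        X * ∑ j ∈ Finset.Ico 1 (d + 1), (X : ℚ[X]) ^ (d + 1 - j) + X := by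
      rw [Finset.sum_Ico_succ_top (by omega), Finset.mul_sum]
      congr 1
      · refine Finset.sum_congr rfl fun j hj => ?_
        rw [Finset.mem_Ico] at hj
        rw [← pow_succ']
        congr 1
        omega
      · rw [Nat.add_sub_cancel_left, pow_one]
    rw [h, mul_add, mul_left_comm, ih]
    ring

theorem eval_enum (n : ℕ) : (enum n).eval 1 = (codes n).card := by
  simp [enum, eval_finsetSum]

theorem enumIns_mul (n : ℕ) : (X - 1) * enumIns n = enum n - X * C ((enum n).eval 1) := by
  rw [eval_enum, enumIns, enum, Finset.mul_sum, map_natCast, ← nsmul_eq_mul', ← Finset.sum_const,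
    ← Finset.sum_sub_distrib]
  refine Finset.sum_congr rfl fun B hB => ?_
  obtain ⟨d, hd⟩ := Nat.exists_eq_add_one.2 (mem_codes.1 hB).1.deg_pos
  rw [hd, geom]

theorem enum_eq (n : ℕ) : enum n = enumNL n + if n = 1 then X ^ 2 else 0 := by
  classical
  rw [enum, ← Finset.sum_filter_add_sum_filter_not (codes n) (· ≠ link), enumNL]
  congr 1
  split_ifs with h
  · subst h
    rw [Finset.sum_eq_single link]
    · rfl
    · intro b hb hne
      simp [hne] at hb
    · intro h
      exact absurd (Finset.mem_filter.2 ⟨mem_codes.2 ⟨valid_link, rfl⟩, by simp⟩) h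
  · refine Finset.sum_eq_zero fun c hc => absurd ?_ h
    rw [Finset.mem_filter, mem_codes, not_not] at hc
    rw [← hc.1.2, hc.2]
    rfl

theorem enumNL_eq (n : ℕ) : enumNL n = (if n = 1 then X else 0) +
    ∑ p ∈ Finset.HasAntidiagonal.antidiagonal n, enumIns p.1 * enumNL p.2 := by
  classical
  rw [enumNL, ← Finset.sum_filter_add_sum_filter_not ((codes n).filter (· ≠ link)) (· = loop)]
  congr 1
  · split_ifs with h
    · subst h
      rw [Finset.sum_eq_single loop]
      · rw [deg, pow_one]
      · intro b hb hne
        simp [hne] at hb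
      · intro h
        exact absurd (Finset.mem_filter.2 ⟨Finset.mem_filter.2 ⟨mem_codes.2 ⟨valid_loop, rfl⟩,
          by simp⟩, by simp⟩) h
    · refine Finset.sum_eq_zero fun c hc => absurd ?_ h
      rw [Finset.mem_filter, Finset.mem_filter, mem_codes] at hc
      rw [← hc.1.1.2, hc.2]
      rfl
  · have h : ∀ p : ℕ × ℕ, enumIns p.1 * enumNL p.2 =
        ∑ q ∈ (codes p.1 ×ˢ (codes p.2).filter (· ≠ link)).sigma fun q => Finset.Ico 1 q.1.deg,
          (X : ℚ[X]) ^ (ins q.1.1 q.2 q.1.2).deg := by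
      intro p
      rw [Finset.sum_sigma, Finset.sum_product, enumIns, enumNL, Finset.sum_mul_sum]
      refine Finset.sum_congr rfl fun B _ => Finset.sum_congr rfl fun M _ => ?_
      rw [Finset.sum_mul]
      refine Finset.sum_congr rfl fun j _ => ?_
      rw [deg, pow_add, mul_comm]
    simp only [h]
    rw [← Finset.sum_sigma (t := fun p : ℕ × ℕ =>
      (codes p.1 ×ˢ (codes p.2).filter (· ≠ link)).sigma fun q => Finset.Ico 1 q.1.deg)
      (f := fun q => (X : ℚ[X]) ^ (ins q.2.1.1 q.2.2 q.2.1.2).deg)]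
    symm
    refine Finset.sum_nbij (fun q => ins q.2.1.1 q.2.2 q.2.1.2) ?_ ?_ ?_ fun _ _ => rfl
    · rintro ⟨⟨a, b⟩, ⟨B, M⟩, j⟩ hq
      simp only [Finset.mem_sigma, Finset.HasAntidiagonal.mem_antidiagonal, Finset.mem_product, mem_codes,
        Finset.mem_filter, Finset.mem_Ico] at hq
      simp only [Finset.mem_filter, mem_codes, size, Valid]
      obtain ⟨h1, ⟨⟨h2, h3⟩, ⟨h4, h5⟩, h6⟩, h7, h8⟩ := hq
      exact ⟨⟨⟨⟨h2, h4, h6, h7, h8⟩, by omega⟩, by simp⟩, by simp⟩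
    · rintro ⟨⟨a, b⟩, ⟨B, M⟩, j⟩ hq ⟨⟨a', b'⟩, ⟨B', M'⟩, j'⟩ hq' hqq
      simp only [Finset.coe_sigma, Finset.mem_coe, Set.mem_sigma_iff,
        Finset.HasAntidiagonal.mem_antidiagonal, Finset.mem_product, mem_codes, Finset.mem_filter] at hq hq'
      simp only [ins.injEq] at hqq
      obtain ⟨rfl, rfl, rfl⟩ := hqq
      obtain ⟨-, ⟨⟨-, h3⟩, ⟨-, h5⟩, -⟩, -⟩ := hq
      obtain ⟨-, ⟨⟨-, h3'⟩, ⟨-, h5'⟩, -⟩, -⟩ := hq'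
      subst h3 h5 h3' h5'
      rfl
    · rintro c hc
      simp only [Finset.coe_filter, Set.mem_ofPred_eq, Finset.mem_filter, mem_codes] at hc
      obtain ⟨⟨⟨h1, h2⟩, h3⟩, h4⟩ := hc
      cases c with
      | link => exact absurd rfl h3
      | loop => exact absurd rfl h4
      | ins B j M =>
        refine ⟨⟨(B.size, M.size), (B, M), j⟩, ?_, rfl⟩
        simp only [Finset.coe_sigma, Finset.mem_coe, Set.mem_sigma_iff,
          Finset.HasAntidiagonal.mem_antidiagonal, Finset.mem_product, mem_codes, Finset.mem_filter,
          Finset.mem_Ico]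
        exact ⟨h2, ⟨⟨h1.1, trivial⟩, ⟨h1.2.1, trivial⟩, h1.2.2.1⟩, h1.2.2.2.1, h1.2.2.2.2⟩

end Code

section series
open PowerSeries

theorem PowerSeries.eq_of_forall_pow_dvd {R : Type*} [CommRing R] {a b : R⟦X⟧}
    (h : ∀ n, X ^ n ∣ a - b) : a = b := by
  ext n
  have := X_pow_dvd_iff.1 (h (n + 1)) n n.lt_succ_self
  rwa [map_sub, sub_eq_zero] at this

theorem PowerSeries.exists_fixed {R : Type*} [CommRing R] (G : R⟦X⟧ → R⟦X⟧)
    (hG : ∀ a b, a - b ∣ G a - G b) (c : R⟦X⟧) : ∃ w, w = c + X * G w := by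
  have key : ∀ n a b, X ^ n ∣ a - b → X ^ (n + 1) ∣ (c + X * G a) - (c + X * G b) := by
    intro n a b h
    rw [add_sub_add_left_eq_sub, ← mul_sub, pow_succ']
    exact mul_dvd_mul_left _ (h.trans (hG a b))
  let s : ℕ → R⟦X⟧ := fun n => (fun w => c + X * G w)^[n] 0
  have hs : ∀ n, s (n + 1) = c + X * G (s n) := fun n => Function.iterate_succ_apply' _ _ _
  have h1 : ∀ n, X ^ n ∣ s (n + 1) - s n := by
    intro n
    induction n with
    | zero => simp
    | succ n ih =>
      have := key _ _ _ ih
      rwa [← hs, ← hs] at this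
  have h2 : ∀ n k, X ^ n ∣ s (n + k) - s n := by
    intro n k
    induction k with
    | zero => simp
    | succ k ih =>
      rw [← sub_add_sub_cancel _ (s (n + k))]
      exact dvd_add ((pow_dvd_pow _ (by omega)).trans (h1 (n + k))) ih
  let w : R⟦X⟧ := PowerSeries.mk fun n => coeff n (s (n + 1))
  have h3 : ∀ n, X ^ n ∣ w - s n := by
    intro n
    rw [X_pow_dvd_iff]
    intro m hm
    obtain ⟨k, rfl⟩ := Nat.exists_eq_add_of_le (Nat.succ_le_of_lt hm)
    have := X_pow_dvd_iff.1 (h2 (m + 1) k) m m.lt_succ_self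
    rw [map_sub, sub_eq_zero] at this ⊢
    rw [coeff_mk]
    exact this.symm
  refine ⟨w, eq_of_forall_pow_dvd fun n => ?_⟩
  rw [← sub_sub_sub_cancel_right _ _ (s (n + 1))]
  refine dvd_sub ((pow_dvd_pow _ n.le_succ).trans (h3 _)) ?_
  rw [hs n]
  exact (pow_dvd_pow _ n.le_succ).trans (key _ _ _ (h3 n))

/-- The parametrising series. -/
theorem PowerSeries.exists_param : ∃ u t : ℚ⟦X⟧, t = X * u ∧ t * (1 - t) ^ 2 = X := by
  obtain ⟨u, hu⟩ := PowerSeries.exists_fixed (fun u : ℚ⟦X⟧ => 2 * u ^ 2 - X * u ^ 3)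
    (fun a b => ⟨2 * (a + b) - X * (a ^ 2 + a * b + b ^ 2), by ring⟩) 1
  exact ⟨u, X * u, rfl, by linear_combination X * hu⟩

theorem param_deriv {t : ℚ⟦X⟧} (ht : t * (1 - t) ^ 2 = X) :
    d⁄dX ℚ t * ((1 - t) * (1 - 3 * t)) = 1 := by
  have h := congrArg (d⁄dX ℚ) ht
  simp only [Derivation.leibniz, Derivation.leibniz_pow, map_sub, Derivation.map_one_eq_zero,
    derivative_X, smul_eq_mul, nsmul_eq_mul] at h
  push_cast at h
  linear_combination h

theorem param_ode {t C : ℚ⟦X⟧} (ht : t * (1 - t) ^ 2 = X) (hC : C = 2 * t - 3 * t ^ 2) :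
    4 * (X * d⁄dX ℚ (d⁄dX ℚ C)) + 2 * d⁄dX ℚ C =
      27 * (X * (X * d⁄dX ℚ (d⁄dX ℚ C))) + 6 * C + 4 := by
  have ht' := param_deriv ht
  have h1 : (1 - t) * d⁄dX ℚ C = 2 := by
    have h := congrArg (d⁄dX ℚ) hC
    have e2 : d⁄dX ℚ (2 : ℚ⟦X⟧) = 0 := Derivation.map_natCast _ 2
    have e3 : d⁄dX ℚ (3 : ℚ⟦X⟧) = 0 := Derivation.map_natCast _ 3
    simp only [Derivation.leibniz, Derivation.leibniz_pow, map_sub, e2, e3, smul_eq_mul,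
      nsmul_eq_mul] at h
    push_cast at h
    linear_combination (1 - t) * h + 2 * ht'
  have h2 : (1 - t) * d⁄dX ℚ (d⁄dX ℚ C) = d⁄dX ℚ t * d⁄dX ℚ C := by
    have h := congrArg (d⁄dX ℚ) h1
    have e2 : d⁄dX ℚ (2 : ℚ⟦X⟧) = 0 := Derivation.map_natCast _ 2
    simp only [Derivation.leibniz, map_sub, Derivation.map_one_eq_zero, e2, smul_eq_mul] at h
    linear_combination h
  have h3 : (1 - t) ^ 3 * (1 - 3 * t) * d⁄dX ℚ (d⁄dX ℚ C) = 2 := by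
    linear_combination (1 - t) ^ 2 * (1 - 3 * t) * h2 + (1 - t) * d⁄dX ℚ C * ht' + h1
  have hne : ((1 - t) ^ 3 * (1 - 3 * t) : ℚ⟦X⟧) ≠ 0 := by
    intro h
    rw [h, zero_mul] at h3
    have := congrArg constantCoeff h3
    rw [map_zero, map_ofNat] at this
    exact two_ne_zero this.symm
  apply mul_left_cancel₀ hne
  rw [← ht]
  subst hC
  linear_combination (4 * (t * (1 - t) ^ 2) - 27 * (t * (1 - t) ^ 2) ^ 2) * h3 +
    2 * (1 - t) ^ 2 * (1 - 3 * t) * h1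

theorem coeff_of_ode {C : ℚ⟦X⟧} (h : 4 * (X * d⁄dX ℚ (d⁄dX ℚ C)) + 2 * d⁄dX ℚ C =
      27 * (X * (X * d⁄dX ℚ (d⁄dX ℚ C))) + 6 * C + 4) (h0 : coeff 0 C = 0) :
    coeff 1 C = 2 ∧ ∀ k, 1 ≤ k → 2 * (k + 1) * (2 * k + 1) * coeff (k + 1) C =
      3 * (3 * k - 1) * (3 * k - 2) * coeff k C := by
  have e : ∀ (m : ℕ) [m.AtLeastTwo] (f : ℚ⟦X⟧) (n : ℕ),
      coeff n ((OfNat.ofNat m : ℚ⟦X⟧) * f) = (OfNat.ofNat m : ℚ) * coeff n f := by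
    intro m _ f n
    have := coeff_C_mul n f (OfNat.ofNat m : ℚ)
    rwa [map_ofNat] at this
  have e4 : ∀ n, coeff n (4 : ℚ⟦X⟧) = if n = 0 then 4 else 0 := by
    intro n
    have := coeff_C n (4 : ℚ)
    rwa [map_ofNat] at this
  refine ⟨?_, fun k hk => ?_⟩
  · have := congrArg (coeff 0) h
    simp only [map_add, e, e4, coeff_zero_X_mul, coeff_derivative, h0] at this
    norm_num at this
    linarith
  · have := congrArg (coeff k) h
    obtain _ | _ | k := k
    · omega
    · simp only [map_add, e, e4, coeff_succ_X_mul, coeff_zero_X_mul, coeff_derivative,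
        zero_add] at this ⊢
      norm_num at this ⊢
      linarith
    · simp only [map_add, e, e4, coeff_succ_X_mul, coeff_derivative] at this ⊢
      norm_num at this ⊢
      linear_combination this

theorem factorial_of_recurrence {c : ℕ → ℚ} (h1 : c 1 = 2)
    (h : ∀ k : ℕ, 1 ≤ k → 2 * (k + 1) * (2 * k + 1) * c (k + 1) =
      3 * (3 * k - 1) * (3 * k - 2) * c k) (k : ℕ) (hk : 1 ≤ k) :
    c k * (Nat.factorial k * Nat.factorial (2 * k - 1)) = 2 * Nat.factorial (3 * k - 3) := by
  induction k, hk using Nat.le_induction with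
  | base => simp [h1]
  | succ k hk ih =>
    obtain ⟨m, rfl⟩ := Nat.exists_eq_add_of_le' hk
    have r := h (m + 1) hk
    have a1 : 2 * (m + 1) - 1 = 2 * m + 1 := by omega
    have a2 : 3 * (m + 1) - 3 = 3 * m := by omega
    have a3 : 2 * (m + 1 + 1) - 1 = 2 * m + 1 + 1 + 1 := by omega
    have a4 : 3 * (m + 1 + 1) - 3 = 3 * m + 1 + 1 + 1 := by omega
    rw [a1, a2] at ih
    rw [a3, a4, Nat.factorial_succ (m + 1), Nat.factorial_succ (2 * m + 1 + 1),
      Nat.factorial_succ (2 * m + 1), Nat.factorial_succ (3 * m + 1 + 1),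
      Nat.factorial_succ (3 * m + 1), Nat.factorial_succ (3 * m)]
    push_cast at r ⊢
    linear_combination (m + 1 : ℚ) * (Nat.factorial (m + 1)) * (Nat.factorial (2 * m + 1)) * r +
      3 * (3 * (m + 1) - 1) * (3 * (m + 1) - 2) * (m + 1 : ℚ) * ih

end series

section solve
open PowerSeries

/-- Evaluation at `1` of the coefficients. -/
noncomputable def evalOne : (Polynomial ℚ)⟦X⟧ →+* ℚ⟦X⟧ :=
  PowerSeries.map (Polynomial.evalRingHom 1)

/-- Series with constant coefficients. -/
noncomputable def constSeries : ℚ⟦X⟧ →+* (Polynomial ℚ)⟦X⟧ := PowerSeries.map Polynomial.C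

/-- The catalytic variable. -/
noncomputable def catVar : (Polynomial ℚ)⟦X⟧ := PowerSeries.C (Polynomial.X : Polynomial ℚ)

theorem evalOne_constSeries (f : ℚ⟦X⟧) : evalOne (constSeries f) = f := by
  ext n
  simp [evalOne, constSeries]

theorem evalOne_catVar : evalOne catVar = 1 := by
  simp [evalOne, catVar]

/-- The functional equation of nonseparable maps. -/
def CatEq (L : (Polynomial ℚ)⟦X⟧) : Prop :=
  (catVar - 1) * L = X * catVar * (catVar - 1) +
    (L + X * catVar ^ 2 - catVar * X - catVar * constSeries (evalOne L)) * L

theorem CatEq.unique {L L' : (Polynomial ℚ)⟦X⟧} (h : CatEq L) (h' : CatEq L')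
    (h0 : coeff 0 L = 0) (h0' : coeff 0 L' = 0) : L = L' := by
  ext1 n
  induction n using Nat.strong_induction_on with
  | _ n ih =>
    have hE : ∀ i, i < n → coeff i (constSeries (evalOne L)) =
        coeff i (constSeries (evalOne L')) := by
      intro i hi
      simp [constSeries, evalOne, ih i hi]
    have hz : ∀ F : (Polynomial ℚ)⟦X⟧, coeff 0 F = 0 →
        coeff 0 (F + X * catVar ^ 2 - catVar * X - catVar * constSeries (evalOne F)) = 0 := by
      intro F hF
      have : coeff 0 (constSeries (evalOne F)) = 0 := by
        simp only [constSeries, evalOne, coeff_map, hF, map_zero]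
      rw [coeff_zero_eq_constantCoeff_apply] at hF this ⊢
      simp [this, hF]
    have hp : coeff n ((L + X * catVar ^ 2 - catVar * X - catVar * constSeries (evalOne L)) * L) =
        coeff n ((L' + X * catVar ^ 2 - catVar * X - catVar * constSeries (evalOne L')) * L') := by
      rw [coeff_mul, coeff_mul]
      refine Finset.sum_congr rfl fun p hp => ?_
      rw [Finset.HasAntidiagonal.mem_antidiagonal] at hp
      by_cases h1 : p.1 = 0
      · rw [h1, hz _ h0, hz _ h0', zero_mul, zero_mul]
      by_cases h2 : p.2 = 0
      · rw [h2, h0, h0', mul_zero, mul_zero]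
      · have l1 : p.1 < n := by omega
        have l2 : p.2 < n := by omega
        simp only [map_sub, map_add, catVar, coeff_C_mul, ih _ l1, ih _ l2, hE _ l1]
    have h1 := congrArg (coeff n) h
    have h2 := congrArg (coeff n) h'
    rw [map_add, hp] at h1
    rw [map_add, ← h1] at h2
    have hc : (catVar - 1 : (Polynomial ℚ)⟦X⟧) = PowerSeries.C (Polynomial.X - Polynomial.C 1) := by
      simp [catVar]
    rw [hc, coeff_C_mul, coeff_C_mul] at h2
    exact (mul_left_cancel₀ (Polynomial.X_sub_C_ne_zero 1) h2).symm

theorem exists_catEq {t u : ℚ⟦X⟧} (hu : t = X * u) (ht : t * (1 - t) ^ 2 = X) :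
    ∃ L, CatEq L ∧ coeff 0 L = 0 ∧ evalOne L = t - t ^ 2 - t ^ 3 := by
  set T := constSeries t with hT
  set U := constSeries u with hU
  have hTU : T = X * U := by
    rw [hT, hu, map_mul]
    simp [constSeries, hU]
  have hTX : T * (1 - T) ^ 2 = X := by
    have := congrArg constSeries ht
    simp only [map_mul, map_pow, map_sub, map_one] at this
    rw [this]
    simp [constSeries]
  obtain ⟨w, hw⟩ := PowerSeries.exists_fixed
    (fun w => U * ((1 + T + (1 - T) * (catVar - 1)) * w + T * w ^ 2))
    (fun a b => ⟨U * ((1 + T + (1 - T) * (catVar - 1)) + T * (a + b)), by ring⟩)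
    ((1 - T ^ 2) * (catVar - 1))
  have hw' : w = (1 - T ^ 2) * (catVar - 1) +
      T * ((1 + T + (1 - T) * (catVar - 1)) * w + T * w ^ 2) := by
    rw [hTU] at hw ⊢
    linear_combination hw
  have ht0 : constantCoeff t = 0 := by simp [hu]
  have hT0 : constantCoeff T = 0 := by simp [hTU]
  have hew : evalOne w = 0 := by
    have h := congrArg evalOne hw'
    simp only [map_add, map_mul, map_sub, map_one, map_pow, evalOne_catVar, hT,
      evalOne_constSeries] at h
    have h1 : evalOne w * (1 - t - t ^ 2 - t ^ 2 * evalOne w) = 0 := by linear_combination h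
    refine (mul_eq_zero.1 h1).resolve_right fun h2 => ?_
    have := congrArg constantCoeff h2
    simp [ht0] at this
  set L := T * (1 - T - T ^ 2) + T * (1 - T ^ 2) * (catVar - 1) +
    ((1 - T) * (catVar - 1) - T) * T ^ 2 * w with hL
  have hLe : evalOne L = t - t ^ 2 - t ^ 3 := by
    simp only [hL, map_add, map_mul, map_sub, map_one, map_pow, evalOne_catVar, hT,
      evalOne_constSeries, hew]
    ring
  refine ⟨L, ?_, ?_, hLe⟩
  · rw [CatEq, hLe]
    simp only [map_sub, map_pow, ← hT]
    rw [← hTX, hL]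
    linear_combination ((1 - T) * (catVar - 1) - T) ^ 2 * T ^ 2 * hw'
  · rw [coeff_zero_eq_constantCoeff_apply, hL]
    simp [hT0]

end solve

namespace Code
open PowerSeries

theorem codes_zero : codes 0 = ∅ :=
  Finset.eq_empty_of_forall_notMem fun c hc => c.size_pos.ne' (mem_codes.1 hc).2

theorem catEq_enumNL : CatEq (PowerSeries.mk enumNL) := by
  have hN : (PowerSeries.mk enum : (Polynomial ℚ)⟦X⟧) =
      PowerSeries.mk enumNL + X * catVar ^ 2 := by
    ext1 n
    rw [map_add, coeff_mk, coeff_mk, enum_eq, catVar, ← map_pow, mul_comm, coeff_C_mul, coeff_X]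
    simp
  have hE : constSeries (evalOne (PowerSeries.mk enum)) =
      constSeries (evalOne (PowerSeries.mk enumNL)) + X := by
    rw [hN]
    simp only [map_add, map_mul, map_pow, evalOne_catVar, one_pow, mul_one]
    simp [evalOne, constSeries]
  have hP : (catVar - 1) * PowerSeries.mk enumIns = PowerSeries.mk enum -
      catVar * constSeries (evalOne (PowerSeries.mk enum)) := by
    have hc : (catVar - 1 : (Polynomial ℚ)⟦X⟧) = PowerSeries.C (Polynomial.X - 1) := by
      simp [catVar]
    ext1 n
    rw [hc, coeff_C_mul, coeff_mk, enumIns_mul, map_sub, coeff_mk, catVar, coeff_C_mul]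
    simp [constSeries, evalOne]
  have hL : (PowerSeries.mk enumNL : (Polynomial ℚ)⟦X⟧) =
      catVar * X + PowerSeries.mk enumIns * PowerSeries.mk enumNL := by
    ext1 n
    rw [map_add, coeff_mk, enumNL_eq, catVar, coeff_C_mul, coeff_X, coeff_mul]
    simp
  rw [hE, hN] at hP
  rw [CatEq]
  linear_combination (catVar - 1) * hL + PowerSeries.mk enumNL * hP

theorem card_codes_formula (k : ℕ) (hk : 1 ≤ k) :
    (codes k).card * (Nat.factorial k * Nat.factorial (2 * k - 1)) =
      2 * Nat.factorial (3 * k - 3) := by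
  obtain ⟨u, t, hu, ht⟩ := PowerSeries.exists_param
  obtain ⟨L, h1, h2, h3⟩ := exists_catEq hu ht
  have h0 : coeff 0 (PowerSeries.mk enumNL) = 0 := by
    rw [coeff_mk, enumNL, codes_zero]
    simp
  have hL := catEq_enumNL.unique h1 h0 h2
  have hC : (PowerSeries.mk fun n => ((codes n).card : ℚ)) = 2 * t - 3 * t ^ 2 := by
    have : (PowerSeries.mk fun n => ((codes n).card : ℚ)) =
        evalOne (PowerSeries.mk enumNL) + X := by
      ext n
      rw [coeff_mk, ← eval_enum, enum_eq, map_add, coeff_X, evalOne, coeff_map, coeff_mk,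
        Polynomial.eval_add, Polynomial.coe_evalRingHom]
      split_ifs <;> simp
    rw [this, hL, h3]
    linear_combination -ht
  obtain ⟨c1, cr⟩ := coeff_of_ode (param_ode ht hC) (by rw [coeff_mk, codes_zero]; simp)
  simp only [coeff_mk] at c1 cr
  exact_mod_cast factorial_of_recurrence (c := fun n => ((codes n).card : ℚ)) c1 cr k hk

end Code

end

/-- **Tutte.** The number of rooted 2-connected planar maps with
`k` edges satisfies `C_0 = 1` and `C_k = 2 · (3k-3)! / (k! · (2k-1)!)` for `k ≥ 1`. -/
theorem tutte_two_connected_count :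
    bconnCount 0 = 1 ∧
    ∀ k : ℕ, 1 ≤ k →
      bconnCount k * (Nat.factorial k * Nat.factorial (2 * k - 1)) =
        2 * Nat.factorial (3 * k - 3) := by
  refine ⟨if_pos rfl, fun k hk => ?_⟩
  rw [bconnCount_eq_codes (by omega), Code.card_codes]
  exact Code.card_codes_formula k hk
end

section
/- Define μ on the even nonnegative integers by μ({2k}) = C_k·(4/27)^k / C(4/27), where C_0 = 1, C_k = 2·(3k−3)!/(k!·(2k−1)!) and C(4/27) = Σ_{k≥0} C_k (4/27)^k. Then μ is a probability measure on ℕ (supported on even numbers) and its mean Σ_{k≥0} 2k·μ({2k}) equals 2/3. -/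
/-- The number of rooted 2-connected planar maps with `k` edges (Tutte's formula),
as a real number: `C 0 = 1` and `C k = 2 (3k-3)! / (k! (2k-1)!)` for `k ≥ 1`. -/
noncomputable def C (k : ℕ) : ℝ :=
  if k = 0 then 1
  else 2 * (Nat.factorial (3 * k - 3) : ℝ) /
    ((Nat.factorial k : ℝ) * (Nat.factorial (2 * k - 1) : ℝ))

/-- The probability mass function `μ` on `ℕ`, supported on even numbers:
`μ({2k}) = C_k (4/27)^k / C(4/27)` where `C(4/27) = 4/3`. -/
noncomputable def mu (m : ℕ) : ℝ :=
  if Even m then C (m / 2) * (4 / 27) ^ (m / 2) / (4 / 3) else 0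

/-- The general term `(-1/3)_k (-2/3)_k / (k! (d)_k)` of the hypergeometric series
`₂F₁(-1/3, -2/3; d; 1)`. -/
noncomputable def hypTerm (d : ℝ) (k : ℕ) : ℝ :=
  ∏ j ∈ Finset.range k, ((j : ℝ) - 1 / 3) * (j - 2 / 3) / ((j + 1) * (j + d))

lemma hypTerm_zero (d : ℝ) : hypTerm d 0 = 1 := by simp [hypTerm]

lemma hypTerm_succ (d : ℝ) (k : ℕ) :
    hypTerm d (k + 1) = hypTerm d k * (((k : ℝ) - 1 / 3) * (k - 2 / 3) / ((k + 1) * (k + d))) := by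
  exact Finset.prod_range_succ _ k

lemma natCast_sub_third_mul_nonneg (j : ℕ) : 0 ≤ ((j : ℝ) - 1 / 3) * (j - 2 / 3) := by
  rcases j with _ | j
  · norm_num
  · have : (0 : ℝ) ≤ j := j.cast_nonneg
    push_cast
    nlinarith

lemma hypTerm_nonneg {d : ℝ} (hd : 0 < d) (k : ℕ) : 0 ≤ hypTerm d k :=
  Finset.prod_nonneg fun j _ => div_nonneg (natCast_sub_third_mul_nonneg j) (by positivity)

lemma hypTerm_anti {c d : ℝ} (hc : 0 < c) (hcd : c ≤ d) (k : ℕ) : hypTerm d k ≤ hypTerm c k := by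
  refine Finset.prod_le_prod (fun j _ => ?_) fun j _ => ?_
  · have : 0 < d := hc.trans_le hcd
    exact div_nonneg (natCast_sub_third_mul_nonneg j) (by positivity)
  · exact div_le_div_of_nonneg_left (natCast_sub_third_mul_nonneg j) (by positivity) (by gcongr)

lemma hypTerm_add_one {d : ℝ} (hd : 0 < d) (k : ℕ) :
    hypTerm (d + 1) k * (d + k) = hypTerm d k * d := by
  induction k with
  | zero => simp [hypTerm_zero]
  | succ k ih =>
    have h1 : (k : ℝ) + d ≠ 0 := by positivity
    have h2 : (k : ℝ) + 1 + d ≠ 0 := by positivity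
    have h4 : (k : ℝ) + (d + 1) ≠ 0 := by positivity
    have h3 : (k : ℝ) + 1 ≠ 0 := by positivity
    have h5 : hypTerm (d + 1) k = hypTerm d k * d / (d + k) := by
      rw [← ih, mul_div_cancel_right₀ _ (by positivity)]
    have h6 : d + (k : ℝ) ≠ 0 := by positivity
    rw [hypTerm_succ, hypTerm_succ, h5]
    push_cast
    field_simp
    ring

lemma mul_hypTerm_succ_le {c d : ℝ} (hc : 0 < c) (hcd : c ≤ d) (k : ℕ) :
    d * hypTerm d (k + 1) ≤ c * hypTerm c (k + 1) := by
  have hd : 0 < d := hc.trans_le hcd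
  induction k with
  | zero =>
    simp only [hypTerm_succ, hypTerm_zero]
    apply le_of_eq
    push_cast
    field_simp
    simp
  | succ k ih =>
    rw [hypTerm_succ d (k + 1), hypTerm_succ c (k + 1), ← mul_assoc, ← mul_assoc]
    refine mul_le_mul ih ?_ ?_ ?_
    · exact div_le_div_of_nonneg_left (natCast_sub_third_mul_nonneg _) (by positivity) (by gcongr)
    · exact div_nonneg (natCast_sub_third_mul_nonneg _) (by positivity)
    · exact mul_nonneg hc.le (hypTerm_nonneg hc _)

lemma sum_range_mul_hypTerm_half (n : ℕ) :
    ∑ k ∈ Finset.range n, ((k : ℝ) / 2 - 2 / 9) * hypTerm (1 / 2) k =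
      -((n : ℝ) * (n - 1 / 2) * hypTerm (1 / 2) n) := by
  induction n with
  | zero => simp
  | succ n ih =>
    rw [Finset.sum_range_succ, ih, hypTerm_succ]
    have h1 : (n : ℝ) + 1 ≠ 0 := by positivity
    have h2 : (n : ℝ) * 2 + 1 ≠ 0 := by positivity
    push_cast
    field_simp
    ring

lemma natCast_mul_sub_half_nonneg (n : ℕ) : 0 ≤ (n : ℝ) * (n - 1 / 2) := by
  rcases n with _ | n
  · simp
  · push_cast
    exact mul_nonneg (by positivity) (by linarith [(n.cast_nonneg : (0 : ℝ) ≤ n)])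

lemma summable_natCast_mul_hypTerm_half :
    Summable fun k : ℕ => (k : ℝ) * hypTerm (1 / 2) k := by
  have hpos := hypTerm_nonneg (d := 1 / 2) (by norm_num)
  rw [← summable_nat_add_iff 1]
  refine summable_of_sum_range_le (c := 8 / 9) (fun k => mul_nonneg (by positivity) (hpos _))
    fun n => ?_
  have h := sum_range_mul_hypTerm_half (n + 1)
  rw [Finset.sum_range_succ', hypTerm_zero] at h
  have h2 : ∑ k ∈ Finset.range n, (((k + 1 : ℕ) : ℝ) * hypTerm (1 / 2) (k + 1)) ≤
      ∑ k ∈ Finset.range n, 4 * ((((k + 1 : ℕ) : ℝ) / 2 - 2 / 9) * hypTerm (1 / 2) (k + 1)) := by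
    refine Finset.sum_le_sum fun k _ => ?_
    rw [← mul_assoc]
    refine mul_le_mul_of_nonneg_right ?_ (hpos _)
    push_cast
    linarith [(k.cast_nonneg : (0 : ℝ) ≤ k)]
  rw [← Finset.mul_sum] at h2
  have h3 := mul_nonneg (natCast_mul_sub_half_nonneg (n + 1)) (hpos (n + 1))
  push_cast at h h2 h3 ⊢
  linarith

lemma summable_natCast_mul_hypTerm {d : ℝ} (hd : 1 / 2 ≤ d) :
    Summable fun k : ℕ => (k : ℝ) * hypTerm d k :=
  summable_natCast_mul_hypTerm_half.of_nonneg_of_le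
    (fun k => mul_nonneg k.cast_nonneg (hypTerm_nonneg (by linarith) k))
    fun k => mul_le_mul_of_nonneg_left (hypTerm_anti (by norm_num) hd k) k.cast_nonneg

lemma summable_hypTerm {d : ℝ} (hd : 1 / 2 ≤ d) : Summable (hypTerm d) := by
  rw [← summable_nat_add_iff 1]
  refine ((summable_nat_add_iff 1).2 (summable_natCast_mul_hypTerm hd)).of_nonneg_of_le
    (fun k => hypTerm_nonneg (by linarith) _) fun k => ?_
  refine le_mul_of_one_le_left (hypTerm_nonneg (by linarith) _) ?_
  exact_mod_cast Nat.le_add_left 1 k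

/-- The contiguous relation behind Gauss's summation theorem. -/
lemma tsum_hypTerm_add_one {d : ℝ} (hd : 1 / 2 ≤ d) :
    d * (d + 1) * ∑' k, hypTerm d k =
      (d + 1 / 3) * (d + 2 / 3) * ∑' k, hypTerm (d + 1) k := by
  have hd0 : 0 < d := by linarith
  have hs := summable_natCast_mul_hypTerm hd
  have h0 := hs.tsum_eq_zero_add
  rw [Nat.cast_zero, zero_mul, zero_add] at h0
  have hs1 := (summable_nat_add_iff 1).2 hs
  have key : ∀ k : ℕ, d * (d + 1) * hypTerm d k - (d + 1 / 3) * (d + 2 / 3) * hypTerm (d + 1) k =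
      d * (k * hypTerm d k) - d * (((k + 1 : ℕ) : ℝ) * hypTerm d (k + 1)) := fun k => by
    have h6 : d + (k : ℝ) ≠ 0 := by positivity
    have h7 : (k : ℝ) + d ≠ 0 := by positivity
    have h8 : (k : ℝ) + 1 ≠ 0 := by positivity
    have h5 : hypTerm (d + 1) k = hypTerm d k * d / (d + k) := by
      rw [← hypTerm_add_one hd0, mul_div_cancel_right₀ _ h6]
    rw [h5, hypTerm_succ]
    push_cast
    field_simp
    ring
  have h := congrArg (fun f : ℕ → ℝ => ∑' k, f k) (funext key)
  beta_reduce at h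
  rw [((summable_hypTerm hd).mul_left _).tsum_sub
      ((summable_hypTerm (by linarith : 1 / 2 ≤ d + 1)).mul_left _),
    (hs.mul_left _).tsum_sub (hs1.mul_left _)] at h
  simp only [tsum_mul_left] at h
  rw [← h0] at h
  linarith

lemma tendsto_tsum_hypTerm :
    Filter.Tendsto (fun n : ℕ => ∑' k, hypTerm (1 / 2 + n) k) Filter.atTop (nhds 1) := by
  have hle : ∀ n : ℕ, (1 / 2 : ℝ) ≤ 1 / 2 + n := fun n => by simp
  have hsplit : ∀ n : ℕ, ∑' k, hypTerm (1 / 2 + n) k =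
      1 + ∑' k, hypTerm (1 / 2 + n) (k + 1) := fun n => by
    rw [(summable_hypTerm (hle n)).tsum_eq_zero_add, hypTerm_zero]
  simp only [hsplit]
  suffices Filter.Tendsto (fun n : ℕ => ∑' k, hypTerm (1 / 2 + n) (k + 1)) Filter.atTop (nhds 0) by
    simpa using this.const_add 1
  have hlim : Filter.Tendsto
      (fun n : ℕ => (1 / 2 * ∑' k, hypTerm (1 / 2) (k + 1)) / (1 / 2 + (n : ℝ)))
      Filter.atTop (nhds 0) :=
    Filter.Tendsto.const_div_atTop
      (Filter.tendsto_atTop_add_const_left _ _ tendsto_natCast_atTop_atTop) _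
  refine squeeze_zero (fun n => tsum_nonneg fun k => hypTerm_nonneg (by positivity) _)
    (fun n => ?_) hlim
  rw [le_div_iff₀ (by positivity), mul_comm, ← tsum_mul_left, ← tsum_mul_left]
  exact Summable.tsum_le_tsum (fun k => mul_hypTerm_succ_le (by norm_num) (hle n) k)
    (((summable_nat_add_iff 1).2 (summable_hypTerm (hle n))).mul_left _)
    (((summable_nat_add_iff 1).2 (summable_hypTerm le_rfl)).mul_left _)

lemma tsum_hypTerm_half_eq_prod (n : ℕ) :
    ∑' k, hypTerm (1 / 2) k =
      (∏ j ∈ Finset.range n, (5 / 6 + (j : ℝ)) * (7 / 6 + j) / ((1 / 2 + j) * (3 / 2 + j))) *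
        ∑' k, hypTerm (1 / 2 + n) k := by
  induction n with
  | zero => simp
  | succ n ih =>
    have h := tsum_hypTerm_add_one (d := 1 / 2 + n) (by simp)
    rw [ih, Finset.prod_range_succ, mul_assoc]
    congr 1
    push_cast
    rw [← add_assoc, div_mul_eq_mul_div, eq_div_iff (by positivity)]
    linear_combination h

lemma tendsto_prod_range_ratio :
    Filter.Tendsto (fun n : ℕ => ∏ j ∈ Finset.range (n + 1),
      (5 / 6 + (j : ℝ)) * (7 / 6 + j) / ((1 / 2 + j) * (3 / 2 + j)))
      Filter.atTop (nhds (3 / 2)) := by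
  have hval : Real.Gamma (1 / 2) * Real.Gamma (3 / 2) /
      (Real.Gamma (5 / 6) * Real.Gamma (7 / 6)) = 3 / 2 := by
    have h1 : Real.Gamma (3 / 2) = 1 / 2 * Real.Gamma (1 / 2) := by
      rw [← Real.Gamma_add_one (by norm_num)]; norm_num
    have h2 : Real.Gamma (7 / 6) = 1 / 6 * Real.Gamma (1 / 6) := by
      rw [← Real.Gamma_add_one (by norm_num)]; norm_num
    have h3 : Real.Gamma (1 / 6) * Real.Gamma (5 / 6) = 2 * Real.pi := by
      have h := Real.Gamma_mul_Gamma_one_sub (1 / 6)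
      rw [show Real.pi * (1 / 6) = Real.pi / 6 by ring, Real.sin_pi_div_six] at h
      norm_num at h ⊢
      linarith
    have h4 : Real.Gamma (1 / 2) * Real.Gamma (1 / 2) = Real.pi := by
      rw [Real.Gamma_one_half_eq, Real.mul_self_sqrt Real.pi_pos.le]
    have h5 := Real.pi_pos
    rw [h1, h2, div_eq_iff]
    · linear_combination 1 / 2 * h4 - 1 / 4 * h3
    · intro h
      have : Real.pi = 0 := by linear_combination 3 * h - 1 / 2 * h3
      exact h5.ne' this
  have hne : Real.Gamma (5 / 6) * Real.Gamma (7 / 6) ≠ 0 :=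
    mul_ne_zero (Real.Gamma_pos_of_pos (by norm_num)).ne' (Real.Gamma_pos_of_pos (by norm_num)).ne'
  have hlim := ((Real.GammaSeq_tendsto_Gamma (1 / 2)).mul
    (Real.GammaSeq_tendsto_Gamma (3 / 2))).div
    ((Real.GammaSeq_tendsto_Gamma (5 / 6)).mul (Real.GammaSeq_tendsto_Gamma (7 / 6))) hne
  rw [hval] at hlim
  refine hlim.congr' ?_
  filter_upwards [Filter.eventually_gt_atTop 0] with n hn
  have hn' : (0 : ℝ) < n := by exact_mod_cast hn
  have hpow : (n : ℝ) ^ (1 / 2 : ℝ) * (n : ℝ) ^ (3 / 2 : ℝ) =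
      (n : ℝ) ^ (5 / 6 : ℝ) * (n : ℝ) ^ (7 / 6 : ℝ) := by
    rw [← Real.rpow_add hn', ← Real.rpow_add hn']; norm_num
  have hprod : ∀ s : ℝ, 0 < s → ∏ j ∈ Finset.range (n + 1), (s + (j : ℝ)) ≠ 0 := fun s hs =>
    Finset.prod_ne_zero_iff.2 fun j _ => by positivity
  have p1 := hprod (1 / 2) (by norm_num)
  have p2 := hprod (3 / 2) (by norm_num)
  have p3 := hprod (5 / 6) (by norm_num)
  have p4 := hprod (7 / 6) (by norm_num)
  have hf : (n.factorial : ℝ) ≠ 0 := by positivity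
  have q3 := (Real.rpow_pos_of_pos hn' (5 / 6)).ne'
  have q4 := (Real.rpow_pos_of_pos hn' (7 / 6)).ne'
  simp only [Pi.div_apply, Real.GammaSeq, Finset.prod_div_distrib,
    Finset.prod_mul_distrib]
  generalize ∏ j ∈ Finset.range (n + 1), ((1 / 2 : ℝ) + (j : ℝ)) = a at *
  generalize ∏ j ∈ Finset.range (n + 1), ((3 / 2 : ℝ) + (j : ℝ)) = b at *
  generalize ∏ j ∈ Finset.range (n + 1), ((5 / 6 : ℝ) + (j : ℝ)) = c at *
  generalize ∏ j ∈ Finset.range (n + 1), ((7 / 6 : ℝ) + (j : ℝ)) = e at *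
  generalize (n : ℝ) ^ (1 / 2 : ℝ) = w at *
  generalize (n : ℝ) ^ (3 / 2 : ℝ) = x at *
  generalize (n : ℝ) ^ (5 / 6 : ℝ) = y at *
  generalize (n : ℝ) ^ (7 / 6 : ℝ) = z at *
  rw [show w * n.factorial / a * (x * n.factorial / b) = (w * x) * n.factorial ^ 2 / (a * b) by
    field_simp, hpow]
  field_simp

lemma hasSum_hypTerm_half : HasSum (hypTerm (1 / 2)) (3 / 2) := by
  have hlim := tendsto_prod_range_ratio.mul
    (tendsto_tsum_hypTerm.comp (Filter.tendsto_add_atTop_nat 1))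
  have hconst : ∑' k, hypTerm (1 / 2) k = 3 / 2 := by
    rw [← mul_one (3 / 2 : ℝ)]
    refine tendsto_nhds_unique (tendsto_const_nhds.congr fun n => ?_) hlim
    exact tsum_hypTerm_half_eq_prod (n + 1)
  exact hconst ▸ (summable_hypTerm le_rfl).hasSum

lemma tendsto_mul_hypTerm_half :
    Filter.Tendsto (fun n : ℕ => (n : ℝ) * (n - 1 / 2) * hypTerm (1 / 2) n)
      Filter.atTop (nhds 0) := by
  have hs : Summable fun k : ℕ => ((k : ℝ) / 2 - 2 / 9) * hypTerm (1 / 2) k := by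
    refine ((summable_natCast_mul_hypTerm_half.mul_left (1 / 2)).sub
      ((summable_hypTerm le_rfl).mul_left (2 / 9))).congr fun k => ?_
    ring
  obtain ⟨L, hL⟩ : ∃ L, Filter.Tendsto
      (fun n : ℕ => (n : ℝ) * (n - 1 / 2) * hypTerm (1 / 2) n) Filter.atTop (nhds L) := by
    refine ⟨_, hs.hasSum.tendsto_sum_nat.neg.congr fun n => ?_⟩
    rw [sum_range_mul_hypTerm_half, neg_neg]
  have hpos := hypTerm_nonneg (d := 1 / 2) (by norm_num)
  have hL0 : 0 ≤ L := ge_of_tendsto' hL fun n =>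
    mul_nonneg (natCast_mul_sub_half_nonneg n) (hpos n)
  rcases hL0.eq_or_lt with h | h
  · rwa [h]
  · refine absurd ?_ Real.not_summable_natCast_inv
    refine (summable_natCast_mul_hypTerm_half.mul_left (2 / L)).of_norm_bounded_eventually_nat ?_
    filter_upwards [hL.eventually_const_lt (half_lt_self h), Filter.eventually_gt_atTop 0]
      with n hn hn0
    have hn' : (0 : ℝ) < n := by exact_mod_cast hn0
    rw [Real.norm_of_nonneg (by positivity), inv_le_iff_one_le_mul₀ hn', div_mul_eq_mul_div,
      div_mul_eq_mul_div, le_div_iff₀ h]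
    nlinarith [mul_nonneg hn'.le (hpos n)]

lemma hasSum_natCast_mul_hypTerm_half :
    HasSum (fun k : ℕ => (k : ℝ) * hypTerm (1 / 2) k) (2 / 3) := by
  have h1 : HasSum (fun k : ℕ => ((k : ℝ) / 2 - 2 / 9) * hypTerm (1 / 2) k) 0 := by
    have hs : Summable fun k : ℕ => ((k : ℝ) / 2 - 2 / 9) * hypTerm (1 / 2) k := by
      refine ((summable_natCast_mul_hypTerm_half.mul_left (1 / 2)).sub
        ((summable_hypTerm le_rfl).mul_left (2 / 9))).congr fun k => ?_
      ring
    rw [hs.hasSum_iff_tendsto_nat]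
    simpa only [sum_range_mul_hypTerm_half, neg_zero] using tendsto_mul_hypTerm_half.neg
  convert (h1.mul_left 2).add (hasSum_hypTerm_half.mul_left (4 / 9)) using 1
  · rfl
  · ext k
    ring
  · norm_num

lemma C_succ_mul_pow (k : ℕ) :
    C (k + 1) * (4 / 27) ^ (k + 1) = 2 / 3 * hypTerm (1 / 2) (k + 1) := by
  induction k with
  | zero => norm_num [C, hypTerm]
  | succ k ih =>
    rw [hypTerm_succ, ← mul_assoc, ← ih]
    simp only [C, Nat.add_eq_zero_iff, one_ne_zero, and_false, if_false]
    rw [show 3 * (k + 1 + 1) - 3 = 3 * k + 2 + 1 by omega,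
      show 3 * (k + 1) - 3 = 3 * k by omega,
      show 2 * (k + 1 + 1) - 1 = 2 * k + 1 + 1 + 1 by omega,
      show 2 * (k + 1) - 1 = 2 * k + 1 by omega]
    rw [Nat.factorial_succ (k + 1), Nat.factorial_succ (2 * k + 1 + 1),
      Nat.factorial_succ (2 * k + 1), Nat.factorial_succ (3 * k + 2),
      Nat.factorial_succ (3 * k + 1), Nat.factorial_succ (3 * k)]
    have h1 : ((k + 1).factorial : ℝ) ≠ 0 := by positivity
    have h2 : ((2 * k + 1).factorial : ℝ) ≠ 0 := by positivity
    generalize ((k + 1).factorial) = a at *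
    generalize ((2 * k + 1).factorial) = b at *
    push_cast
    have h3 : (k : ℝ) + 1 + 1 ≠ 0 := by positivity
    have h4 : 2 * (k : ℝ) + 1 + 1 ≠ 0 := by positivity
    have h5 : 2 * (k : ℝ) + 1 + 1 + 1 ≠ 0 := by positivity
    have h6 : (k : ℝ) + 1 + 1 / 2 ≠ 0 := by positivity
    field_simp
    ring

lemma hasSum_C_mul_pow : HasSum (fun k : ℕ => C k * (4 / 27) ^ k) (4 / 3) := by
  rw [← hasSum_nat_add_iff' 1]
  simp only [C_succ_mul_pow]
  convert ((hasSum_nat_add_iff' 1).2 hasSum_hypTerm_half).mul_left (2 / 3) using 1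
  · rfl
  · norm_num [C, hypTerm]

lemma hasSum_natCast_mul_C_mul_pow :
    HasSum (fun k : ℕ => (k : ℝ) * (C k * (4 / 27) ^ k)) (4 / 9) := by
  convert hasSum_natCast_mul_hypTerm_half.mul_left (2 / 3) using 1
  · rfl
  · ext k
    rcases k with _ | k
    · simp
    · rw [C_succ_mul_pow]; ring
  · norm_num

lemma C_nonneg (k : ℕ) : 0 ≤ C k := by
  unfold C
  split_ifs <;> positivity

lemma mu_two_mul (k : ℕ) : mu (2 * k) = C k * (4 / 27) ^ k / (4 / 3) := by
  simp [mu]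

lemma mu_eq_zero_of_notMem_range {m : ℕ} (hm : m ∉ Set.range fun k : ℕ => 2 * k) :
    mu m = 0 :=
  if_neg fun h => hm (by obtain ⟨k, rfl⟩ := h.two_dvd; exact ⟨k, rfl⟩)

/-- `μ` is a probability distribution on `ℕ` (supported on the
even numbers by definition), and its mean `Σ_m m · μ(m) = Σ_k 2k · μ({2k})`
equals `2/3`. -/
theorem mu_isProbability_and_mean :
    (∀ m : ℕ, 0 ≤ mu m) ∧ HasSum mu 1 ∧
      HasSum (fun m : ℕ => (m : ℝ) * mu m) (2 / 3) := by
  have hinj : Function.Injective fun k : ℕ => 2 * k := mul_right_injective₀ two_ne_zero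
  refine ⟨fun m => ?_, ?_, ?_⟩
  · unfold mu
    split_ifs
    · have := C_nonneg (m / 2)
      positivity
    · exact le_rfl
  · rw [← hinj.hasSum_iff fun m hm => mu_eq_zero_of_notMem_range hm]
    convert hasSum_C_mul_pow.div_const (4 / 3) using 1
    · rfl
    · ext k; exact mu_two_mul k
    · norm_num
  · rw [← hinj.hasSum_iff fun m hm => by rw [mu_eq_zero_of_notMem_range hm, mul_zero]]
    convert hasSum_natCast_mul_C_mul_pow.mul_left (3 / 2) using 1
    · rfl
    · ext k
      simp only [Function.comp_apply, mu_two_mul]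
      push_cast
      ring
    · norm_num
end
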